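/- arXiv:2411.09832 — 2 statements merged into one kernel-verified Lean document; each statement's English description precedes it below -/
import Mathlib

section
/- For an interval hypergraph 𝕀 on [n], the hypergraphic poset P_𝕀 is a distributive lattice (a lattice satisfying a ∨ (b ∧ c) = (a ∨ b) ∧ (a ∨ c) for all a, b, c) if and only if for all I, J ∈ 𝕀 such that I ⊈ J, J ⊈ I and I ∩ J ≠ ∅, the intersection I ∩ J belongs to 𝕀 and is initial or final in every K ∈ 𝕀 with I ∩ J ⊆ K (i.e., min(I ∩ J) = min(K) or max(I ∩ J) = max(K)). -/
namespace IHL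

/-- The hyperedges of a hypergraph, as a subtype. -/
abbrev Edge (𝕀 : Finset (Finset ℕ)) : Type := {H : Finset ℕ // H ∈ 𝕀}

/-- `ℋ` is a hypergraph on `[n] = {1,…,n}`: hyperedges are nonempty subsets of `[n]`
and all singletons belong to `ℋ`. -/
def IsHypergraph (n : ℕ) (ℋ : Finset (Finset ℕ)) : Prop :=
  (∀ H ∈ ℋ, H.Nonempty ∧ H ⊆ Finset.Icc 1 n) ∧
    ∀ i, 1 ≤ i → i ≤ n → ({i} : Finset ℕ) ∈ ℋ

/-- `𝕀` is an interval hypergraph on `[n]`: hyperedges are intervals `[a,b] ⊆ [n]`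
and all singletons belong to `𝕀`. -/
def IsIntervalHypergraph (n : ℕ) (𝕀 : Finset (Finset ℕ)) : Prop :=
  (∀ H ∈ 𝕀, ∃ a b, 1 ≤ a ∧ a ≤ b ∧ b ≤ n ∧ H = Finset.Icc a b) ∧
    ∀ i, 1 ≤ i → i ≤ n → ({i} : Finset ℕ) ∈ 𝕀

/-- An orientation assigns to each hyperedge one of its elements. -/
def IsOrientation (𝕀 : Finset (Finset ℕ)) (O : Edge 𝕀 → ℕ) : Prop :=
  ∀ H : Edge 𝕀, O H ∈ H.1

/-- Acyclicity: there is no cyclic sequence `H_0, …, H_k` with `k ≥ 2`, `H_k = H_0`, and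
`O (H (p+1)) ∈ H p \ {O (H p)}` for all `p < k`. -/
def IsAcyclic (𝕀 : Finset (Finset ℕ)) (O : Edge 𝕀 → ℕ) : Prop :=
  ¬∃ (k : ℕ) (H : ℕ → Edge 𝕀), 2 ≤ k ∧ H k = H 0 ∧
    ∀ p < k, O (H (p + 1)) ∈ (H p).1 ∧ O (H (p + 1)) ≠ O (H p)

/-- An acyclic orientation, i.e. an element of the hypergraphic poset. -/
def AcycOr (𝕀 : Finset (Finset ℕ)) (O : Edge 𝕀 → ℕ) : Prop :=
  IsOrientation 𝕀 O ∧ IsAcyclic 𝕀 O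

/-- Increasing flip from `O` to `O'` flipping `i` to `j`. -/
def IsIncFlip (n : ℕ) (𝕀 : Finset (Finset ℕ)) (i j : ℕ) (O O' : Edge 𝕀 → ℕ) : Prop :=
  O ≠ O' ∧ 1 ≤ i ∧ i < j ∧ j ≤ n ∧
    ∀ H : Edge 𝕀,
      (O H ≠ O' H → O H = i ∧ O' H = j) ∧
      (i ∈ H.1 → j ∈ H.1 → (O H = i ↔ O' H = j))

/-- One increasing flip step between acyclic orientations. -/
def FlipStep (n : ℕ) (𝕀 : Finset (Finset ℕ)) (O O' : Edge 𝕀 → ℕ) : Prop :=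
  AcycOr 𝕀 O ∧ AcycOr 𝕀 O' ∧ ∃ i j, IsIncFlip n 𝕀 i j O O'

/-- The order of the hypergraphic poset `P_𝕀`: reflexive-transitive closure of
the increasing flip relation on acyclic orientations. -/
def leP (n : ℕ) (𝕀 : Finset (Finset ℕ)) : (Edge 𝕀 → ℕ) → (Edge 𝕀 → ℕ) → Prop :=
  Relation.ReflTransGen (FlipStep n 𝕀)

/-- Strict order of the hypergraphic poset. -/
def ltP (n : ℕ) (𝕀 : Finset (Finset ℕ)) (A B : Edge 𝕀 → ℕ) : Prop :=
  leP n 𝕀 A B ∧ A ≠ B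

/-- `B` covers `A` in `P_𝕀`. -/
def CoversP (n : ℕ) (𝕀 : Finset (Finset ℕ)) (A B : Edge 𝕀 → ℕ) : Prop :=
  ltP n 𝕀 A B ∧ ¬∃ C, AcycOr 𝕀 C ∧ ltP n 𝕀 A C ∧ ltP n 𝕀 C B

/-- `𝕀` is closed under intersection. -/
def ClosedUnderIntersection (𝕀 : Finset (Finset ℕ)) : Prop :=
  ∀ I ∈ 𝕀, ∀ J ∈ 𝕀, (I ∩ J).Nonempty → I ∩ J ∈ 𝕀

/-- `π` is a permutation of `[n]` (it fixes everything outside `[1,n]`). -/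
def IsPermOn (n : ℕ) (π : Equiv.Perm ℕ) : Prop :=
  ∀ x, x ∉ Finset.Icc 1 n → π x = x

/-- The surjection `Or` from permutations to acyclic orientations:
`Or_π (H) = π (min {p : π p ∈ H})`. -/
noncomputable def orMap (𝕀 : Finset (Finset ℕ)) (π : Equiv.Perm ℕ) : Edge 𝕀 → ℕ :=
  fun H => π (sInf {p | π p ∈ H.1})

/-- The weak order on permutations of `[n]`, via inclusion of inversion sets. -/
def weakLe (n : ℕ) (σ τ : Equiv.Perm ℕ) : Prop :=
  ∀ a b, 1 ≤ a → a < b → b ≤ n → σ.symm b < σ.symm a → τ.symm b < τ.symm a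

/-- `π` contains the pattern 231. -/
def Contains231 (n : ℕ) (π : Equiv.Perm ℕ) : Prop :=
  ∃ p q r, 1 ≤ p ∧ p < q ∧ q < r ∧ r ≤ n ∧ π r < π p ∧ π p < π q

/-- `π` contains the pattern 213. -/
def Contains213 (n : ℕ) (π : Equiv.Perm ℕ) : Prop :=
  ∃ p q r, 1 ≤ p ∧ p < q ∧ q < r ∧ r ≤ n ∧ π q < π p ∧ π p < π r

/-- The partial order `≺_A`: transitive closure of `A H ≺ h` for `h ∈ H \ {A H}`. -/
def prec (𝕀 : Finset (Finset ℕ)) (A : Edge 𝕀 → ℕ) : ℕ → ℕ → Prop :=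
  Relation.TransGen fun a b => ∃ H : Edge 𝕀, A H = a ∧ b ∈ H.1 ∧ b ≠ a

/-- The distributivity condition on interval hypergraphs: for all `I, J ∈ 𝕀` with
`I ⊈ J`, `J ⊈ I` and `I ∩ J ≠ ∅`, the intersection `I ∩ J` is in `𝕀` and is initial
or final in any `K ∈ 𝕀` containing it. -/
def IsDistribHG (𝕀 : Finset (Finset ℕ)) : Prop :=
  ∀ I ∈ 𝕀, ∀ J ∈ 𝕀, ¬I ⊆ J → ¬J ⊆ I → (I ∩ J).Nonempty →
    (I ∩ J ∈ 𝕀 ∧ ∀ K ∈ 𝕀, I ∩ J ⊆ K → ((I ∩ J).min = K.min ∨ (I ∩ J).max = K.max))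

/-- `j ∈ 𝒥_𝕀 = ⋃_{I ∈ 𝕀} (I \ {min I})`. -/
def InJI (𝕀 : Finset (Finset ℕ)) (j : ℕ) : Prop :=
  ∃ I ∈ 𝕀, j ∈ I ∧ ∃ y ∈ I, y < j

/-- `Jj` is the interval `J_j = ⋂ {I ∈ 𝕀 : j ∈ I \ {min I}}`. -/
def IsJj (𝕀 : Finset (Finset ℕ)) (j : ℕ) (Jj : Finset ℕ) : Prop :=
  ∀ x, x ∈ Jj ↔ ∀ I ∈ 𝕀, j ∈ I → (∃ y ∈ I, y < j) → x ∈ I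

/-- `Aj` is the orientation `A_j` (where `μj = min J_j`):
`A_j (J) = j` if `j ∈ J` and `min J = μ_j`, and `A_j (J) = min J` otherwise. -/
def IsAj (𝕀 : Finset (Finset ℕ)) (j μj : ℕ) (Aj : Edge 𝕀 → ℕ) : Prop :=
  ∀ J : Edge 𝕀,
    (j ∈ J.1 ∧ IsLeast (J.1 : Set ℕ) μj → Aj J = j) ∧
    (¬(j ∈ J.1 ∧ IsLeast (J.1 : Set ℕ) μj) → IsLeast (J.1 : Set ℕ) (Aj J))

/-- `Jij` is the interval `J_{ij} = ⋂ {I ∈ 𝕀 : {i,j} ⊆ I}`. -/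
def IsJij (𝕀 : Finset (Finset ℕ)) (i j : ℕ) (Jij : Finset ℕ) : Prop :=
  ∀ x, x ∈ Jij ↔ ∀ I ∈ 𝕀, i ∈ I → j ∈ I → x ∈ I

/-- `(i,j) ∈ ℐ𝒥_𝕀`, where `μij = min J_{ij}`: both lie in a common hyperedge and
`i = max ([μ_{ij}, j) \ ⋃ {J \ {min J} : J ∈ 𝕀, J ⊆ [μ_{ij}, j)})`. -/
def InIJ (n : ℕ) (𝕀 : Finset (Finset ℕ)) (i j μij : ℕ) : Prop :=
  1 ≤ i ∧ i < j ∧ j ≤ n ∧ (∃ I ∈ 𝕀, i ∈ I ∧ j ∈ I) ∧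
    IsGreatest {m | μij ≤ m ∧ m < j ∧
      ∀ J ∈ 𝕀, (∀ x ∈ J, μij ≤ x ∧ x < j) → m ∈ J → ∀ y ∈ J, m ≤ y} i

/-- `Aij` is the orientation `A_{ij}` (where `μij = min J_{ij}`):
`A_{ij} (J) = j` if `j ∈ J` and `min J ≥ μ_{ij}`, and `A_{ij} (J) = min J` otherwise. -/
def IsAij (𝕀 : Finset (Finset ℕ)) (j μij : ℕ) (Aij : Edge 𝕀 → ℕ) : Prop :=
  ∀ J : Edge 𝕀,
    (j ∈ J.1 ∧ (∀ x ∈ J.1, μij ≤ x) → Aij J = j) ∧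
    (¬(j ∈ J.1 ∧ (∀ x ∈ J.1, μij ≤ x)) → IsLeast (J.1 : Set ℕ) (Aij J))

/-- The reversal `x ↦ n - x + 1` on `[n]`. -/
def revPt (n x : ℕ) : ℕ := n - x + 1

/-- The reversed hypergraph `ℋ↔`. -/
def revHG (n : ℕ) (ℋ : Finset (Finset ℕ)) : Finset (Finset ℕ) :=
  ℋ.image fun H => H.image (revPt n)

/-
An interval hypergraph satisfies the condition on crossing pairs exactly when it is closed under
intersection and, inside each edge, any two meeting edges are nested. In that case the maximal
proper subedges of an edge `H` partition `H` into consecutive blocks. An acyclic orientation is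
determined by the block containing its value at each `H`, these blocks may be chosen independently
of each other, and the order compares them one edge at a time: the poset is a product of chains.

Conversely, let `I` and `J` cross, with `I` on the left. If `I ∩ J` is not an edge and has extreme
points `j < k`, there are two orientations with upper bounds forcing a join to take the value `j`
on `I` and `k` on `J`, which is a cycle. If `I ∪ J` lies in an edge, cut `[n]` into the points left
of the overlap, those inside it and those right of it: permuting these three blocks yields a
pentagon.
-/

section Order

/-- A partial order is a distributive lattice: suprema and infima of pairs exist, and they satisfy
the distributive law. This is the propositional counterpart of `DistribLattice`. -/
def IsDistribLattice (α : Type*) [PartialOrder α] : Prop :=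
  ∃ sup inf : α → α → α, (∀ a b, IsLUB {a, b} (sup a b)) ∧ (∀ a b, IsGLB {a, b} (inf a b)) ∧
    ∀ a b c, sup a (inf b c) = inf (sup a b) (sup a c)

variable {α : Type*} [PartialOrder α]

theorem IsDistribLattice.of_orderEmbedding {β : Type*} [DistribLattice β] (f : α ↪o β)
    (hsup : ∀ a b, ∃ c, f c = f a ⊔ f b) (hinf : ∀ a b, ∃ c, f c = f a ⊓ f b) :
    IsDistribLattice α := by
  choose sup hsup using hsup
  choose inf hinf using hinf
  refine ⟨sup, inf, fun a b ↦ ?_, fun a b ↦ ?_, fun a b c ↦ f.injective ?_⟩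
  · refine IsLUB.of_image (f := f) f.le_iff_le ?_
    rw [Set.image_pair, hsup]
    exact isLUB_pair
  · refine IsGLB.of_image (f := f) f.le_iff_le ?_
    rw [Set.image_pair, hinf]
    exact isGLB_pair
  · simp only [hsup, hinf, sup_inf_left]

theorem IsDistribLattice.exists_isLUB (h : IsDistribLattice α) (a b : α) :
    ∃ c, IsLUB {a, b} c :=
  let ⟨sup, _, hsup, _⟩ := h
  ⟨sup a b, hsup a b⟩

theorem isLUB_pair_of_le {a b : α} (h : b ≤ a) : IsLUB {a, b} a :=
  ⟨by simp [h], fun _ hc ↦ hc (by simp)⟩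

theorem isGLB_pair_of_le {a b : α} (h : a ≤ b) : IsGLB {a, b} a :=
  ⟨by simp [h], fun _ hc ↦ hc (by simp)⟩

theorem IsDistribLattice.eq_of_pentagon (h : IsDistribLattice α) {b x y z t : α}
    (hby : b ≤ y) (hyx : y ≤ x) (hxt : x ≤ t) (ht : Minimal (· ∈ upperBounds {y, z}) t)
    (hb : Maximal (· ∈ lowerBounds {x, z}) b) : y = x := by
  obtain ⟨sup, inf, hsup, hinf, hdistrib⟩ := h
  have sup_yz : sup y z = t := ht.eq_of_le (hsup y z).1 ((hsup y z).2 ht.prop)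
  have inf_xz : inf x z = b := hb.eq_of_ge (hinf x z).1 ((hinf x z).2 hb.prop)
  calc
    y = sup y b := (isLUB_pair_of_le hby).unique (hsup y b)
    _ = sup y (inf x z) := by rw [inf_xz]
    _ = inf (sup y x) (sup y z) := hdistrib y x z
    _ = inf x t := by rw [(hsup y x).unique (Set.pair_comm x y ▸ isLUB_pair_of_le hyx), sup_yz]
    _ = x := (hinf x t).unique (isGLB_pair_of_le hxt)

end Order

section NoPeak

variable {α : Type*} [LinearOrder α] {S : α → α → Prop}

theorem transGen_descent (hirr : ∀ a, ¬S a a)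
    (hpeak : ∀ a b c, S a b → S b c → a < b → c < b → S a c) {a b m : α}
    (hab : S a b) (hbm : Relation.ReflTransGen (fun x y ↦ S x y ∧ y < x) b m) :
    Relation.TransGen (fun x y ↦ S x y ∧ y < x) a m ∨ (S a m ∧ a < m) := by
  induction hbm using Relation.ReflTransGen.head_induction_on with
  | refl =>
    have hne : a ≠ m := fun h ↦ hirr a (h ▸ hab)
    exact hne.lt_or_gt.symm.imp (fun hlt ↦ .single ⟨hab, hlt⟩) fun hlt ↦ ⟨hab, hlt⟩
  | @head b c hbc hcm ih =>
    have hne : a ≠ b := fun h ↦ hirr a (h ▸ hab)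
    rcases hne.lt_or_gt with hlt | hlt
    · exact ih (hpeak a b c hab hbc.1 hlt hbc.2)
    · exact .inl (.head' ⟨hab, hlt⟩ (.head hbc hcm))

-- Replacing peaks `a < b > c` of a path by shortcuts `a → c` leaves a single valley.
theorem transGen_valley (hirr : ∀ a, ¬S a a)
    (hpeak : ∀ a b c, S a b → S b c → a < b → c < b → S a c) {a b : α}
    (hab : Relation.TransGen S a b) :
    (∃ m, Relation.TransGen (fun x y ↦ S x y ∧ y < x) a m ∧
      Relation.ReflTransGen (fun x y ↦ S x y ∧ x < y) m b) ∨
    Relation.TransGen (fun x y ↦ S x y ∧ x < y) a b := by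
  induction hab using Relation.TransGen.head_induction_on with
  | @single a hab =>
    have hne : a ≠ b := fun h ↦ hirr a (h ▸ hab)
    exact hne.lt_or_gt.symm.imp (fun hlt ↦ ⟨b, .single ⟨hab, hlt⟩, .refl⟩)
      fun hlt ↦ .single ⟨hab, hlt⟩
  | @head a c hac _ ih =>
    have hne : a ≠ c := fun h ↦ hirr a (h ▸ hac)
    rcases ih with ⟨m, hcm, hmb⟩ | hcb
    · rcases transGen_descent hirr hpeak hac hcm.to_reflTransGen with ham | ham
      · exact .inl ⟨m, ham, hmb⟩
      · exact .inr (.head' ham hmb)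
    · exact hne.lt_or_gt.symm.imp
        (fun hlt ↦ ⟨c, .single ⟨hac, hlt⟩, hcb.to_reflTransGen⟩) fun hlt ↦ .head ⟨hac, hlt⟩ hcb

-- A cycle reduces to one whose only peak is its base point `a`; the shortcut there gives a cycle
-- through the smaller point following `a`.
theorem not_transGen_self [WellFoundedLT α] (hirr : ∀ a, ¬S a a)
    (hpeak : ∀ a b c, S a b → S b c → a < b → c < b → S a c) (a : α) :
    ¬Relation.TransGen S a a := by
  have lt_of_ascent {x y : α} (h : Relation.TransGen (fun x y ↦ S x y ∧ x < y) x y) : x < y :=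
    Relation.TransGen.trans_induction_on h (fun h ↦ h.2) fun _ _ ↦ lt_trans
  have gt_of_descent {x y : α} (h : Relation.TransGen (fun x y ↦ S x y ∧ y < x) x y) : y < x :=
    Relation.TransGen.trans_induction_on h (fun h ↦ h.2) fun _ _ hxy hyz ↦ hyz.trans hxy
  induction a using WellFoundedLT.induction with
  | ind a ih =>
  intro hcycle
  rcases transGen_valley hirr hpeak hcycle with ⟨m, ham, hma⟩ | haa
  · obtain ⟨c, hac, hcm⟩ := Relation.TransGen.head'_iff.mp ham
    rcases Relation.ReflTransGen.cases_tail hma with rfl | ⟨b, hmb, hba⟩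
    · exact (gt_of_descent ham).false
    · have hbc : S b c := hpeak b a c hba.1 hac.1 hba.2 hac.2
      have hcb : Relation.ReflTransGen S c b :=
        (hcm.lift id fun _ _ h ↦ h.1).trans (hmb.lift id fun _ _ h ↦ h.1)
      exact ih c hac.2 (.tail' hcb hbc)
  · exact (lt_of_ascent haa).false

end NoPeak

section Acyclicity

variable {n : ℕ} {ℋ : Finset (Finset ℕ)} {O : Edge ℋ → ℕ}

theorem isAcyclic_of_irrefl_prec (h : ∀ a, ¬prec ℋ O a a) : IsAcyclic ℋ O := by
  rintro ⟨k, H, hk, hHk, hstep⟩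
  have hpath : ∀ p < k, prec ℋ O (O (H 0)) (O (H (p + 1))) := by
    intro p hp
    induction p with
    | zero => exact .single ⟨H 0, rfl, hstep 0 hp⟩
    | succ p ih => exact .tail (ih (by lia)) ⟨H (p + 1), rfl, hstep (p + 1) hp⟩
  refine h (O (H 0)) ?_
  simpa only [Nat.sub_add_cancel (by lia : 1 ≤ k), hHk] using hpath (k - 1) (by lia)

theorem isAcyclic_of_rank (r : ℕ → ℕ) (hr : ∀ H : Edge ℋ, ∀ x ∈ H.1, x ≠ O H → r (O H) < r x) :
    IsAcyclic ℋ O := by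
  refine isAcyclic_of_irrefl_prec fun a ha ↦ lt_irrefl (r a) ?_
  refine Relation.TransGen.trans_induction_on (motive := fun {x y} _ ↦ r x < r y) ha ?_
    fun _ _ ↦ lt_trans
  rintro _ x ⟨H, rfl, hx, hne⟩
  exact hr H x hx hne

theorem AcycOr.eq_of_mem_of_mem (hO : AcycOr ℋ O) {K L : Edge ℋ} (hK : O K ∈ L.1)
    (hL : O L ∈ K.1) : O K = O L := by
  by_contra hne
  refine hO.2 ⟨2, fun p ↦ if p = 1 then L else K, le_rfl, by simp, fun p hp ↦ ?_⟩
  interval_cases p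
  · exact ⟨by simpa using hL, by simpa using Ne.symm hne⟩
  · exact ⟨by simpa using hK, by simpa using hne⟩

/-- Nestedness of an orientation: an edge `K` contained in an edge `L` takes the value of `L`
whenever that value lies in `K`. -/
def IsNested (ℋ : Finset (Finset ℕ)) (O : Edge ℋ → ℕ) : Prop :=
  ∀ K L : Edge ℋ, K.1 ⊆ L.1 → O L ∈ K.1 → O K = O L

theorem AcycOr.isNested (hO : AcycOr ℋ O) : IsNested ℋ O :=
  fun K _ hKL hL ↦ hO.eq_of_mem_of_mem (hKL (hO.1 K)) hL

theorem IsIntervalHypergraph.isHypergraph (h : IsIntervalHypergraph n ℋ) : IsHypergraph n ℋ := by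
  refine ⟨fun H hH ↦ ?_, h.2⟩
  obtain ⟨a, b, ha, hab, hb, rfl⟩ := h.1 H hH
  exact ⟨Finset.nonempty_Icc.mpr hab, Finset.Icc_subset_Icc ha hb⟩

theorem IsIntervalHypergraph.mem_of_le_of_le (h : IsIntervalHypergraph n ℋ) {H : Finset ℕ}
    (hH : H ∈ ℋ) {x y z : ℕ} (hx : x ∈ H) (hz : z ∈ H) (hxy : x ≤ y) (hyz : y ≤ z) : y ∈ H := by
  obtain ⟨a, b, -, -, -, rfl⟩ := h.1 H hH
  rw [Finset.mem_Icc] at hx hz ⊢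
  exact ⟨hx.1.trans hxy, hyz.trans hz.2⟩

theorem IsNested.mem_of_peak (hℋ : IsIntervalHypergraph n ℋ) (hcap : ClosedUnderIntersection ℋ)
    (hor : IsOrientation ℋ O) (hO : IsNested ℋ O) {K L : Edge ℋ} {c : ℕ} (hLK : O L ∈ K.1)
    (hc : c ∈ L.1) (hlt : O K < O L) (hcL : c < O L) : c ∈ K.1 ∧ c ≠ O K := by
  have hKL : O L ∈ K.1 ∩ L.1 := Finset.mem_inter.mpr ⟨hLK, hor L⟩
  let M : Edge ℋ := ⟨K.1 ∩ L.1, hcap _ K.2 _ L.2 ⟨_, hKL⟩⟩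
  have hM : O M = O L := hO M L Finset.inter_subset_right hKL
  have hK : O K ∉ L.1 := fun hmem ↦
    hlt.ne ((hO M K Finset.inter_subset_left (Finset.mem_inter.mpr ⟨hor K, hmem⟩)).symm.trans hM)
  have hKc : O K < c := by
    by_contra! hle
    exact hK (hℋ.mem_of_le_of_le L.2 hc (hor L) hle hlt.le)
  exact ⟨hℋ.mem_of_le_of_le K.2 (hor K) hLK hKc.le hcL.le, hKc.ne'⟩

theorem acycOr_of_isNested (hℋ : IsIntervalHypergraph n ℋ) (hcap : ClosedUnderIntersection ℋ)
    (hor : IsOrientation ℋ O) (hO : IsNested ℋ O) : AcycOr ℋ O := by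
  refine ⟨hor, isAcyclic_of_irrefl_prec (not_transGen_self ?_ ?_)⟩
  · rintro a ⟨H, -, -, hne⟩
    exact hne rfl
  · rintro _ _ c ⟨K, rfl, hLK, -⟩ ⟨L, rfl, hc, -⟩ hlt hcL
    exact ⟨K, rfl, hO.mem_of_peak hℋ hcap hor hLK hc hlt hcL⟩

end Acyclicity

section Condition

variable {n : ℕ} {ℋ : Finset (Finset ℕ)}

/-- Local laminarity: inside each edge, any two meeting edges are nested. -/
def LocallyLaminar (ℋ : Finset (Finset ℕ)) : Prop :=
  ∀ H ∈ ℋ, ∀ K ∈ ℋ, ∀ L ∈ ℋ, H ⊆ L → K ⊆ L → (H ∩ K).Nonempty → H ⊆ K ∨ K ⊆ H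

/-- The sets `I` and `J` cross, with `I` on the left: they overlap in the nonempty open interval
`(p, q)`, where `p` belongs to `I` and `q` to `J`. -/
structure IsCrossing (p q : ℕ) (I J : Finset ℕ) : Prop where
  succ_lt : p + 1 < q
  inter_eq : I ∩ J = Finset.Ioo p q
  left_mem : p ∈ I
  right_mem : q ∈ J

section IsCrossing

variable {p q : ℕ} {I J : Finset ℕ}

theorem IsCrossing.mem_inter (h : IsCrossing p q I J) {x : ℕ} :
    x ∈ I ∩ J ↔ p < x ∧ x < q := by
  rw [h.inter_eq, Finset.mem_Ioo]

theorem IsCrossing.lt (h : IsCrossing p q I J) : p < q := Nat.lt_of_succ_lt h.succ_lt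

theorem IsCrossing.left_notMem (h : IsCrossing p q I J) : p ∉ J := fun hp ↦
  lt_irrefl p (h.mem_inter.mp (Finset.mem_inter.mpr ⟨h.left_mem, hp⟩)).1

theorem IsCrossing.right_notMem (h : IsCrossing p q I J) : q ∉ I := fun hq ↦
  lt_irrefl q (h.mem_inter.mp (Finset.mem_inter.mpr ⟨hq, h.right_mem⟩)).2

theorem IsCrossing.succ_mem_inter (h : IsCrossing p q I J) : p + 1 ∈ I ∩ J :=
  h.mem_inter.mpr ⟨Nat.lt_succ_self p, h.succ_lt⟩

theorem IsCrossing.pred_mem_inter (h : IsCrossing p q I J) : q - 1 ∈ I ∩ J :=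
  h.mem_inter.mpr (by have := h.succ_lt; lia)

theorem IsCrossing.lt_of_mem_right (h : IsCrossing p q I J) (hℋ : IsIntervalHypergraph n ℋ)
    (hJ : J ∈ ℋ) {x : ℕ} (hx : x ∈ J) : p < x := by
  by_contra! hxp
  exact h.left_notMem
    (hℋ.mem_of_le_of_le hJ hx (Finset.mem_inter.mp h.succ_mem_inter).2 hxp (Nat.le_succ p))

theorem IsCrossing.lt_of_mem_left (h : IsCrossing p q I J) (hℋ : IsIntervalHypergraph n ℋ)
    (hI : I ∈ ℋ) {x : ℕ} (hx : x ∈ I) : x < q := by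
  by_contra! hqx
  exact h.right_notMem
    (hℋ.mem_of_le_of_le hI (Finset.mem_inter.mp h.succ_mem_inter).1 hx h.succ_lt.le hqx)

theorem IsCrossing.min_ne_and_max_ne (h : IsCrossing p q I J) {L : Finset ℕ} (hp : p ∈ L)
    (hq : q ∈ L) : (I ∩ J).min ≠ L.min ∧ (I ∩ J).max ≠ L.max := by
  have hne : (I ∩ J).Nonempty := ⟨_, h.succ_mem_inter⟩
  refine ⟨fun hmin ↦ ?_, fun hmax ↦ ?_⟩
  · obtain ⟨m, hm⟩ := Finset.min_of_nonempty hne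
    have hpm : p < m := (h.mem_inter.mp (Finset.mem_of_min hm)).1
    exact hpm.not_ge (Finset.min_le_of_eq hp (hmin ▸ hm))
  · obtain ⟨m, hm⟩ := Finset.max_of_nonempty hne
    have hmq : m < q := (h.mem_inter.mp (Finset.mem_of_max hm)).2
    exact hmq.not_ge (Finset.le_max_of_eq hq (hmax ▸ hm))

end IsCrossing

theorem IsIntervalHypergraph.exists_isCrossing (h : IsIntervalHypergraph n ℋ) {I J : Finset ℕ}
    (hI : I ∈ ℋ) (hJ : J ∈ ℋ) (hIJ : ¬I ⊆ J) (hJI : ¬J ⊆ I) (hne : (I ∩ J).Nonempty) :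
    ∃ p q, IsCrossing p q I J ∨ IsCrossing p q J I := by
  obtain ⟨a, b, ha, hab, -, rfl⟩ := h.1 I hI
  obtain ⟨c, d, hc, hcd, -, rfl⟩ := h.1 J hJ
  rw [Finset.Icc_subset_Icc_iff hab] at hIJ
  rw [Finset.Icc_subset_Icc_iff hcd] at hJI
  obtain ⟨x, hx⟩ := hne
  simp only [Finset.mem_inter, Finset.mem_Icc] at hx
  rcases lt_or_ge a c with hac | hca
  · refine ⟨c - 1, b + 1, .inl ⟨by lia, ?_, ?_, ?_⟩⟩
    · ext y; simp only [Finset.mem_inter, Finset.mem_Icc, Finset.mem_Ioo]; lia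
    all_goals simp only [Finset.mem_Icc]; lia
  · refine ⟨a - 1, d + 1, .inr ⟨by lia, ?_, ?_, ?_⟩⟩
    · ext y; simp only [Finset.mem_inter, Finset.mem_Icc, Finset.mem_Ioo]; lia
    all_goals simp only [Finset.mem_Icc]; lia

theorem closedUnderIntersection_of_forall_not_subset
    (h : ∀ I ∈ ℋ, ∀ J ∈ ℋ, ¬I ⊆ J → ¬J ⊆ I → (I ∩ J).Nonempty → I ∩ J ∈ ℋ) :
    ClosedUnderIntersection ℋ := by
  intro I hI J hJ hne
  by_cases hIJ : I ⊆ J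
  · rwa [Finset.inter_eq_left.mpr hIJ]
  by_cases hJI : J ⊆ I
  · rwa [Finset.inter_eq_right.mpr hJI]
  exact h I hI J hJ hIJ hJI hne

theorem IsDistribHG.closedUnderIntersection (h : IsDistribHG ℋ) : ClosedUnderIntersection ℋ :=
  closedUnderIntersection_of_forall_not_subset
    fun I hI J hJ hIJ hJI hne ↦ (h I hI J hJ hIJ hJI hne).1

theorem IsDistribHG.locallyLaminar (hℋ : IsIntervalHypergraph n ℋ) (h : IsDistribHG ℋ) :
    LocallyLaminar ℋ := by
  intro H hH K hK L hL hHL hKL hne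
  by_contra! hnot
  have hends := (h H hH K hK hnot.1 hnot.2 hne).2 L hL (Finset.inter_subset_left.trans hHL)
  obtain ⟨p, q, hpq | hpq⟩ := hℋ.exists_isCrossing hH hK hnot.1 hnot.2 hne
  · have := hpq.min_ne_and_max_ne (hHL hpq.left_mem) (hKL hpq.right_mem)
    exact hends.elim this.1 this.2
  · have := hpq.min_ne_and_max_ne (hKL hpq.left_mem) (hHL hpq.right_mem)
    rw [Finset.inter_comm] at this
    exact hends.elim this.1 this.2

theorem LocallyLaminar.min_eq_or_max_eq (hℋ : IsIntervalHypergraph n ℋ)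
    (hcap : ClosedUnderIntersection ℋ) (hlam : LocallyLaminar ℋ) {I J K : Finset ℕ} (hI : I ∈ ℋ)
    (hJ : J ∈ ℋ) (hK : K ∈ ℋ) {p q : ℕ} (hIJ : IsCrossing p q I J) (hsub : I ∩ J ⊆ K) :
    (I ∩ J).min = K.min ∨ (I ∩ J).max = K.max := by
  have hmidK : p + 1 ∈ K := hsub hIJ.succ_mem_inter
  have hpq : p ∉ K ∨ q ∉ K := by
    by_contra! hends
    have hpIK := Finset.mem_inter.mpr ⟨hIJ.left_mem, hends.1⟩
    have hqJK := Finset.mem_inter.mpr ⟨hIJ.right_mem, hends.2⟩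
    have hmid := Finset.mem_inter.mp hIJ.succ_mem_inter
    rcases hlam _ (hcap I hI K hK ⟨p, hpIK⟩) _ (hcap J hJ K hK ⟨q, hqJK⟩) K hK
      Finset.inter_subset_right Finset.inter_subset_right ⟨p + 1, by simp [hmid, hmidK]⟩
      with hle | hle
    · exact hIJ.left_notMem (Finset.mem_inter.mp (hle hpIK)).1
    · exact hIJ.right_notMem (Finset.mem_inter.mp (hle hqJK)).1
  rcases hpq with hp | hq
  · refine .inl (le_antisymm (Finset.le_min fun x hx ↦ ?_) (Finset.min_mono hsub))
    have hpx : p < x := by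
      by_contra! hxp
      exact hp (hℋ.mem_of_le_of_le hK hx hmidK hxp (Nat.le_succ p))
    exact (Finset.min_le hIJ.succ_mem_inter).trans (WithTop.coe_le_coe.mpr hpx)
  · refine .inr (le_antisymm (Finset.max_mono hsub) (Finset.max_le fun x hx ↦ ?_))
    have hxq : x < q := by
      by_contra! hqx
      exact hq (hℋ.mem_of_le_of_le hK hmidK hx hIJ.succ_lt.le hqx)
    exact le_trans (WithBot.coe_le_coe.mpr (by lia)) (Finset.le_max hIJ.pred_mem_inter)

theorem isDistribHG_iff (hℋ : IsIntervalHypergraph n ℋ) :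
    IsDistribHG ℋ ↔ ClosedUnderIntersection ℋ ∧ LocallyLaminar ℋ := by
  refine ⟨fun h ↦ ⟨h.closedUnderIntersection, h.locallyLaminar hℋ⟩, ?_⟩
  rintro ⟨hcap, hlam⟩ I hI J hJ hIJ hJI hne
  refine ⟨hcap I hI J hJ hne, fun K hK hsub ↦ ?_⟩
  obtain ⟨p, q, hpq | hpq⟩ := hℋ.exists_isCrossing hI hJ hIJ hJI hne
  · exact hlam.min_eq_or_max_eq hℋ hcap hI hJ hK hpq hsub
  · rw [Finset.inter_comm] at hsub ⊢
    exact hlam.min_eq_or_max_eq hℋ hcap hJ hI hK hpq hsub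

end Condition

section Poset

variable {n : ℕ} {ℋ : Finset (Finset ℕ)}

theorem FlipStep.le {A B : Edge ℋ → ℕ} (h : FlipStep n ℋ A B) : A ≤ B := by
  obtain ⟨-, -, i, j, -, -, hij, -, hflip⟩ := h
  intro H
  by_cases hne : A H = B H
  · exact hne.le
  · obtain ⟨hA, hB⟩ := (hflip H).1 hne
    exact hA ▸ hB ▸ hij.le

theorem leP.le {A B : Edge ℋ → ℕ} (h : leP n ℋ A B) : A ≤ B := by
  induction h with
  | refl => exact le_rfl
  | tail _ hstep ih => exact ih.trans hstep.le

/-- The hypergraphic poset: the acyclic orientations of `ℋ`, ordered by `leP n ℋ`. -/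
@[ext]
structure HypergraphicPoset (n : ℕ) (ℋ : Finset (Finset ℕ)) where
  toFun : Edge ℋ → ℕ
  acycOr : AcycOr ℋ toFun

namespace HypergraphicPoset

instance : CoeFun (HypergraphicPoset n ℋ) fun _ ↦ Edge ℋ → ℕ := ⟨toFun⟩

instance : CanLift (Edge ℋ → ℕ) (HypergraphicPoset n ℋ) toFun (AcycOr ℋ) :=
  ⟨fun A hA ↦ ⟨⟨A, hA⟩, rfl⟩⟩

instance : PartialOrder (HypergraphicPoset n ℋ) where
  le A B := leP n ℋ A B
  le_refl _ := .refl
  le_trans _ _ _ := Relation.ReflTransGen.trans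
  le_antisymm _ _ hAB hBA := HypergraphicPoset.ext (le_antisymm hAB.le hBA.le)

variable {A B C : HypergraphicPoset n ℋ}

theorem apply_mem (A : HypergraphicPoset n ℋ) (H : Edge ℋ) : A H ∈ H.1 := A.acycOr.1 H

theorem apply_le_apply (h : A ≤ B) (H : Edge ℋ) : A H ≤ B H := leP.le h H

theorem isLUB_pair_iff : IsLUB {A, B} C ↔
    leP n ℋ A C ∧ leP n ℋ B C ∧ ∀ D, AcycOr ℋ D → leP n ℋ A D → leP n ℋ B D → leP n ℋ C D := by
  simp only [IsLUB, IsLeast, upperBounds_insert, upperBounds_singleton, mem_lowerBounds,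
    Set.mem_inter_iff, Set.mem_Ici, and_assoc, and_imp]
  exact and_congr_right' (and_congr_right' ⟨fun h D hD ↦ h ⟨D, hD⟩, fun h D ↦ h D D.acycOr⟩)

theorem isGLB_pair_iff : IsGLB {A, B} C ↔
    leP n ℋ C A ∧ leP n ℋ C B ∧ ∀ D, AcycOr ℋ D → leP n ℋ D A → leP n ℋ D B → leP n ℋ D C := by
  simp only [IsGLB, IsGreatest, lowerBounds_insert, lowerBounds_singleton, mem_upperBounds,
    Set.mem_inter_iff, Set.mem_Iic, and_assoc, and_imp]
  exact and_congr_right' (and_congr_right' ⟨fun h D hD ↦ h ⟨D, hD⟩, fun h D ↦ h D D.acycOr⟩)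

open Classical in
/-- Extends a binary operation on the hypergraphic poset to all maps `Edge ℋ → ℕ`, with the first
argument as the junk value. -/
noncomputable def extendOp (op : HypergraphicPoset n ℋ → HypergraphicPoset n ℋ →
    HypergraphicPoset n ℋ) (A B : Edge ℋ → ℕ) : Edge ℋ → ℕ :=
  if h : AcycOr ℋ A ∧ AcycOr ℋ B then op ⟨A, h.1⟩ ⟨B, h.2⟩ else A

theorem extendOp_apply (op : HypergraphicPoset n ℋ → HypergraphicPoset n ℋ →
    HypergraphicPoset n ℋ) (A B : HypergraphicPoset n ℋ) : extendOp op A B = op A B :=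
  dif_pos ⟨A.acycOr, B.acycOr⟩

theorem isDistribLattice_iff : IsDistribLattice (HypergraphicPoset n ℋ) ↔
    ∃ join meet : (Edge ℋ → ℕ) → (Edge ℋ → ℕ) → Edge ℋ → ℕ,
      (∀ A B, AcycOr ℋ A → AcycOr ℋ B →
        (AcycOr ℋ (join A B) ∧ leP n ℋ A (join A B) ∧ leP n ℋ B (join A B) ∧
          ∀ D, AcycOr ℋ D → leP n ℋ A D → leP n ℋ B D → leP n ℋ (join A B) D) ∧
        (AcycOr ℋ (meet A B) ∧ leP n ℋ (meet A B) A ∧ leP n ℋ (meet A B) B ∧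
          ∀ D, AcycOr ℋ D → leP n ℋ D A → leP n ℋ D B → leP n ℋ D (meet A B))) ∧
      ∀ A B C, AcycOr ℋ A → AcycOr ℋ B → AcycOr ℋ C →
        join A (meet B C) = meet (join A B) (join A C) := by
  refine ⟨fun ⟨sup, inf, hsup, hinf, hdistrib⟩ ↦ ?_, fun ⟨join, meet, hlat, hdistrib⟩ ↦ ?_⟩
  · refine ⟨extendOp sup, extendOp inf, fun A B hA hB ↦ ?_, fun A B C hA hB hC ↦ ?_⟩
    · lift A to HypergraphicPoset n ℋ using hA
      lift B to HypergraphicPoset n ℋ using hB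
      simp only [extendOp_apply]
      exact ⟨⟨(sup A B).acycOr, isLUB_pair_iff.mp (hsup A B)⟩,
        (inf A B).acycOr, isGLB_pair_iff.mp (hinf A B)⟩
    · lift A to HypergraphicPoset n ℋ using hA
      lift B to HypergraphicPoset n ℋ using hB
      lift C to HypergraphicPoset n ℋ using hC
      simp only [extendOp_apply, hdistrib]
  · have hlat (A B : HypergraphicPoset n ℋ) := hlat A B A.acycOr B.acycOr
    refine ⟨fun A B ↦ ⟨join A B, (hlat A B).1.1⟩, fun A B ↦ ⟨meet A B, (hlat A B).2.1⟩,
      fun A B ↦ isLUB_pair_iff.mpr (hlat A B).1.2, fun A B ↦ isGLB_pair_iff.mpr (hlat A B).2.2,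
      fun A B C ↦ HypergraphicPoset.ext (hdistrib A B C A.acycOr B.acycOr C.acycOr)⟩

end HypergraphicPoset

end Poset

section ListOrientation

variable {n : ℕ} {ℋ : Finset (Finset ℕ)}

/-- The orientation choosing in each edge its first entry in the list `l`, or its minimum if no
entry of `l` lies in it. For a permutation of `[n]` written as a word this is the orientation
`Or_π`; the default value allows one to write down only the relevant initial part. -/
noncomputable def listOrientation (ℋ : Finset (Finset ℕ)) (l : List ℕ) : Edge ℋ → ℕ :=
  fun H ↦ (l.find? (· ∈ H.1)).getD (sInf (H.1 : Set ℕ))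

section Values

variable {H : Edge ℋ} {u : List ℕ}

theorem listOrientation_append_of_exists (hu : ∃ x ∈ u, x ∈ H.1) (v : List ℕ) :
    listOrientation ℋ (u ++ v) H = listOrientation ℋ u H := by
  have hsome : (u.find? (· ∈ H.1)).isSome := by simpa using hu
  obtain ⟨x, hx⟩ := Option.isSome_iff_exists.mp hsome
  simp [listOrientation, List.find?_append, hx]

theorem listOrientation_append_append_of_forall_middle {v : List ℕ} (hv : ∀ x ∈ v, x ∉ H.1)
    (u w : List ℕ) : listOrientation ℋ (u ++ v ++ w) H = listOrientation ℋ (u ++ w) H := by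
  have hnone : v.find? (· ∈ H.1) = none := by simpa using hv
  simp [listOrientation, List.find?_append, hnone]

theorem listOrientation_append_of_forall_left (hu : ∀ x ∈ u, x ∉ H.1) (v : List ℕ) :
    listOrientation ℋ (u ++ v) H = listOrientation ℋ v H :=
  listOrientation_append_append_of_forall_middle hu [] v

theorem listOrientation_append_of_forall_right {v : List ℕ} (hv : ∀ x ∈ v, x ∉ H.1) (u : List ℕ) :
    listOrientation ℋ (u ++ v) H = listOrientation ℋ u H := by
  simpa using listOrientation_append_append_of_forall_middle hv u []

theorem listOrientation_cons_of_mem {a : ℕ} (ha : a ∈ H.1) (v : List ℕ) :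
    listOrientation ℋ (a :: v) H = a := by
  simp [listOrientation, ha]

theorem listOrientation_cons_of_notMem {a : ℕ} (ha : a ∉ H.1) (v : List ℕ) :
    listOrientation ℋ (a :: v) H = listOrientation ℋ v H := by
  simp [listOrientation, ha]

theorem listOrientation_mem_list (hu : ∃ x ∈ u, x ∈ H.1) : listOrientation ℋ u H ∈ u := by
  have hsome : (u.find? (· ∈ H.1)).isSome := by simpa using hu
  obtain ⟨x, hx⟩ := Option.isSome_iff_exists.mp hsome
  simpa [listOrientation, hx] using List.mem_of_find?_eq_some hx

theorem listOrientation_mem (hℋ : IsHypergraph n ℋ) (l : List ℕ) (H : Edge ℋ) :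
    listOrientation ℋ l H ∈ H.1 := by
  induction l with
  | nil => exact Nat.sInf_mem (s := (H.1 : Set ℕ)) (hℋ.1 H.1 H.2).1
  | cons a l ih =>
    by_cases ha : a ∈ H.1
    · rwa [listOrientation_cons_of_mem ha]
    · rwa [listOrientation_cons_of_notMem ha]

end Values

theorem exists_rank_listOrientation (hℋ : IsHypergraph n ℋ) (l : List ℕ) :
    ∃ r : ℕ → ℕ, ∀ H : Edge ℋ, ∀ x ∈ H.1, x ≠ listOrientation ℋ l H →
      r (listOrientation ℋ l H) < r x := by
  induction l with
  | nil =>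
    exact ⟨id, fun H x hx hne ↦ lt_of_le_of_ne (Nat.sInf_le (s := (H.1 : Set ℕ)) hx) hne.symm⟩
  | cons a l ih =>
    obtain ⟨r, hr⟩ := ih
    refine ⟨fun x ↦ if x = a then 0 else r x + 1, fun H x hx hne ↦ ?_⟩
    by_cases ha : a ∈ H.1
    · rw [listOrientation_cons_of_mem ha] at hne ⊢
      simp [hne]
    · rw [listOrientation_cons_of_notMem ha] at hne ⊢
      have hxa : x ≠ a := fun h ↦ ha (h ▸ hx)
      have hla : listOrientation ℋ l H ≠ a := fun h ↦ ha (h ▸ listOrientation_mem hℋ l H)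
      simpa [hxa, hla] using hr H x hx hne

theorem acycOr_listOrientation (hℋ : IsHypergraph n ℋ) (l : List ℕ) :
    AcycOr ℋ (listOrientation ℋ l) :=
  let ⟨r, hr⟩ := exists_rank_listOrientation hℋ l
  ⟨listOrientation_mem hℋ l, isAcyclic_of_rank r hr⟩

theorem forall_notMem_of_listOrientation_swap_ne {u v : List ℕ} {a b : ℕ} {H : Edge ℋ}
    (hH : listOrientation ℋ (u ++ a :: b :: v) H ≠ listOrientation ℋ (u ++ b :: a :: v) H) :
    (∀ x ∈ u, x ∉ H.1) ∧ a ∈ H.1 ∧ b ∈ H.1 := by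
  by_cases hu : ∃ x ∈ u, x ∈ H.1
  · simp only [listOrientation_append_of_exists hu, ne_eq, not_true] at hH
  push Not at hu
  simp only [listOrientation_append_of_forall_left hu] at hH
  refine ⟨hu, ?_, ?_⟩ <;> by_contra hmem <;>
    simp [listOrientation, List.find?_cons, hmem] at hH

theorem isIncFlip_listOrientation_swap (hℋ : IsHypergraph n ℋ) {u v : List ℕ} {a b : ℕ}
    (hab : a < b)
    (hne : listOrientation ℋ (u ++ a :: b :: v) ≠ listOrientation ℋ (u ++ b :: a :: v)) :
    IsIncFlip n ℋ a b (listOrientation ℋ (u ++ a :: b :: v))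
      (listOrientation ℋ (u ++ b :: a :: v)) := by
  have value_of_miss {H : Edge ℋ} (hu : ∀ x ∈ u, x ∉ H.1) (ha : a ∈ H.1) (hb : b ∈ H.1) :
      listOrientation ℋ (u ++ a :: b :: v) H = a ∧
        listOrientation ℋ (u ++ b :: a :: v) H = b := by
    simp only [listOrientation_append_of_forall_left hu, listOrientation_cons_of_mem ha,
      listOrientation_cons_of_mem hb, and_self]
  obtain ⟨H₀, hH₀⟩ := Function.ne_iff.mp hne
  obtain ⟨hu₀, ha₀, hb₀⟩ := forall_notMem_of_listOrientation_swap_ne hH₀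
  have hHn := (hℋ.1 H₀.1 H₀.2).2
  refine ⟨hne, (Finset.mem_Icc.mp (hHn ha₀)).1, hab, (Finset.mem_Icc.mp (hHn hb₀)).2,
    fun H ↦ ⟨fun hH ↦ ?_, fun ha hb ↦ ?_⟩⟩
  · obtain ⟨hu, ha, hb⟩ := forall_notMem_of_listOrientation_swap_ne hH
    exact value_of_miss hu ha hb
  · by_cases hu : ∃ x ∈ u, x ∈ H.1
    · simp only [listOrientation_append_of_exists hu]
      have hmem := listOrientation_mem_list hu
      exact iff_of_false (fun h ↦ hu₀ a (h ▸ hmem) ha₀) fun h ↦ hu₀ b (h ▸ hmem) hb₀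
    · push Not at hu
      exact iff_of_true (value_of_miss hu ha hb).1 (value_of_miss hu ha hb).2

namespace HypergraphicPoset

/-- The element of the hypergraphic poset given by the orientation `listOrientation ℋ l`. -/
@[simps]
noncomputable def ofList (hℋ : IsHypergraph n ℋ) (l : List ℕ) : HypergraphicPoset n ℋ :=
  ⟨listOrientation ℋ l, acycOr_listOrientation hℋ l⟩

variable (hℋ : IsHypergraph n ℋ)

theorem ofList_nil_apply_le {H : Edge ℋ} {x : ℕ} (hx : x ∈ H.1) : ofList hℋ [] H ≤ x :=
  Nat.sInf_le (s := (H.1 : Set ℕ)) hx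

theorem ofList_swap_le {a b : ℕ} (hab : a < b) (u v : List ℕ) :
    ofList hℋ (u ++ a :: b :: v) ≤ ofList hℋ (u ++ b :: a :: v) := by
  by_cases heq : listOrientation ℋ (u ++ a :: b :: v) = listOrientation ℋ (u ++ b :: a :: v)
  · exact (HypergraphicPoset.ext heq).le
  · exact Relation.ReflTransGen.single ⟨acycOr_listOrientation hℋ _, acycOr_listOrientation hℋ _,
      a, b, isIncFlip_listOrientation_swap hℋ hab heq⟩

theorem ofList_move_le {L : List ℕ} {b : ℕ} (hL : ∀ a ∈ L, a < b) (u v : List ℕ) :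
    ofList hℋ (u ++ L ++ b :: v) ≤ ofList hℋ (u ++ b :: L ++ v) := by
  induction L generalizing u with
  | nil => simp
  | cons a L ih =>
    calc
      ofList hℋ (u ++ a :: L ++ b :: v) ≤ ofList hℋ (u ++ a :: b :: (L ++ v)) := by
        simpa using ih (fun x hx ↦ hL x (by simp [hx])) (u ++ [a])
      _ ≤ ofList hℋ (u ++ b :: a :: (L ++ v)) := ofList_swap_le hℋ (hL a (by simp)) u (L ++ v)
      _ = ofList hℋ (u ++ b :: a :: L ++ v) := by simp

theorem ofList_swap_blocks_le {L R : List ℕ} (hLR : ∀ a ∈ L, ∀ b ∈ R, a < b) (u v : List ℕ) :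
    ofList hℋ (u ++ L ++ R ++ v) ≤ ofList hℋ (u ++ R ++ L ++ v) := by
  induction R generalizing u with
  | nil => simp
  | cons b R ih =>
    calc
      ofList hℋ (u ++ L ++ b :: R ++ v) ≤ ofList hℋ (u ++ [b] ++ L ++ R ++ v) := by
        simpa using ofList_move_le hℋ (fun a ha ↦ hLR a ha b (by simp)) u (R ++ v)
      _ ≤ ofList hℋ (u ++ [b] ++ R ++ L ++ v) :=
        ih (fun a ha x hx ↦ hLR a ha x (by simp [hx])) (u ++ [b])
      _ = ofList hℋ (u ++ b :: R ++ L ++ v) := by simp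

theorem ofList_swap_append_le {L R : List ℕ} (hLR : ∀ a ∈ L, ∀ b ∈ R, a < b) (u : List ℕ) :
    ofList hℋ (u ++ L ++ R) ≤ ofList hℋ (u ++ R ++ L) := by
  simpa using ofList_swap_blocks_le hℋ hLR u []

end HypergraphicPoset

end ListOrientation

section Blocks

variable {n : ℕ} {ℋ : Finset (Finset ℕ)} {H : Finset ℕ} {x y : ℕ}

/-- A block of the edge `H`: a maximal edge properly contained in `H`. -/
def IsBlock (ℋ : Finset (Finset ℕ)) (H D : Finset ℕ) : Prop :=
  Maximal (fun K ↦ K ∈ ℋ ∧ K ⊂ H) D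

theorem IsHypergraph.exists_isBlock (hℋ : IsHypergraph n ℋ) (hH : H ∈ ℋ) (hy : y ∈ H)
    (hne : H ≠ {y}) : ∃ D, IsBlock ℋ H D ∧ y ∈ D := by
  have hyn := Finset.mem_Icc.mp ((hℋ.1 H hH).2 hy)
  have hsingle : {y} ∈ {K ∈ ℋ | K ⊂ H} := Finset.mem_filter.mpr ⟨hℋ.2 y hyn.1 hyn.2,
    (Finset.singleton_subset_iff.mpr hy).ssubset_of_ne hne.symm⟩
  obtain ⟨D, hyD, hD⟩ := Finset.exists_le_maximal _ hsingle
  exact ⟨D, by simpa [IsBlock] using hD, Finset.singleton_subset_iff.mp hyD⟩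

theorem IsBlock.subset_of_mem (hlam : LocallyLaminar ℋ) (hH : H ∈ ℋ) {D K : Finset ℕ}
    (hD : IsBlock ℋ H D) (hK : K ∈ ℋ) (hKH : K ⊂ H) (hxK : x ∈ K) (hxD : x ∈ D) : K ⊆ D :=
  (hlam K hK D hD.prop.1 H hH hKH.subset hD.prop.2.subset
    ⟨x, Finset.mem_inter.mpr ⟨hxK, hxD⟩⟩).elim id (hD.le_of_ge ⟨hK, hKH⟩)

/-- Two points lie in the same block of the edge `H`, or are equal. -/
def SameBlock (ℋ : Finset (Finset ℕ)) (H : Finset ℕ) (x y : ℕ) : Prop :=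
  x = y ∨ ∃ K ∈ ℋ, K ⊂ H ∧ x ∈ K ∧ y ∈ K

theorem SameBlock.symm (h : SameBlock ℋ H x y) : SameBlock ℋ H y x :=
  h.imp Eq.symm fun ⟨K, hK, hKH, hx, hy⟩ ↦ ⟨K, hK, hKH, hy, hx⟩

theorem SameBlock.trans (hlam : LocallyLaminar ℋ) (hH : H ∈ ℋ) {z : ℕ}
    (hxy : SameBlock ℋ H x y) (hyz : SameBlock ℋ H y z) : SameBlock ℋ H x z := by
  obtain rfl | ⟨K, hK, hKH, hxK, hyK⟩ := hxy
  · exact hyz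
  obtain rfl | ⟨L, hL, hLH, hyL, hzL⟩ := hyz
  · exact .inr ⟨K, hK, hKH, hxK, hyK⟩
  rcases hlam K hK L hL H hH hKH.subset hLH.subset ⟨y, Finset.mem_inter.mpr ⟨hyK, hyL⟩⟩
    with hKL | hLK
  · exact .inr ⟨L, hL, hLH, hKL hxK, hzL⟩
  · exact .inr ⟨K, hK, hKH, hxK, hLK hzL⟩

/-- The least element of the block of `H` containing `x`. -/
noncomputable def blockMin (ℋ : Finset (Finset ℕ)) (H : Finset ℕ) (x : ℕ) : ℕ :=
  sInf {y | SameBlock ℋ H x y}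

theorem blockMin_le (h : SameBlock ℋ H x y) : blockMin ℋ H x ≤ y :=
  Nat.sInf_le h

theorem sameBlock_blockMin (ℋ : Finset (Finset ℕ)) (H : Finset ℕ) (x : ℕ) :
    SameBlock ℋ H x (blockMin ℋ H x) :=
  Nat.sInf_mem (s := {y | SameBlock ℋ H x y}) ⟨x, .inl rfl⟩

theorem blockMin_eq_blockMin_iff (hlam : LocallyLaminar ℋ) (hH : H ∈ ℋ) :
    blockMin ℋ H x = blockMin ℋ H y ↔ SameBlock ℋ H x y := by
  refine ⟨fun h ↦ ?_, fun h ↦ le_antisymm ?_ ?_⟩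
  · exact (h ▸ sameBlock_blockMin ℋ H x).trans hlam hH (sameBlock_blockMin ℋ H y).symm
  · exact blockMin_le (h.trans hlam hH (sameBlock_blockMin ℋ H y))
  · exact blockMin_le (h.symm.trans hlam hH (sameBlock_blockMin ℋ H x))

theorem monotone_blockMin (hℋ : IsIntervalHypergraph n ℋ) (H : Finset ℕ) :
    Monotone (blockMin ℋ H) := by
  intro x y hxy
  rcases le_total x (blockMin ℋ H y) with hle | hge
  · exact (blockMin_le (.inl rfl)).trans hle
  · refine blockMin_le ?_
    rcases sameBlock_blockMin ℋ H y with heq | ⟨K, hK, hKH, hyK, hmK⟩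
    · exact .inl (le_antisymm (hxy.trans heq.le) hge)
    · exact .inr ⟨K, hK, hKH, hℋ.mem_of_le_of_le hK hmK hyK hge hxy, hmK⟩

end Blocks

section BlockVector

variable {n : ℕ} {ℋ : Finset (Finset ℕ)}

/-- The orientation obtained from `A` by moving its value on `H` to its value on the edge `D`,
simultaneously on all edges containing `H` on which `A` takes the same value as on `H`. -/
noncomputable def flipAt (A : Edge ℋ → ℕ) (H D : Edge ℋ) : Edge ℋ → ℕ :=
  fun K ↦ if H.1 ⊆ K.1 ∧ A K = A H then A D else A K

theorem isOrientation_flipAt {A : Edge ℋ → ℕ} (hor : IsOrientation ℋ A) {H D : Edge ℋ}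
    (hDH : D.1 ⊆ H.1) : IsOrientation ℋ (flipAt A H D) := by
  intro K
  unfold flipAt
  split_ifs with hK
  · exact hK.1 (hDH (hor D))
  · exact hor K

theorem isNested_flipAt (hlam : LocallyLaminar ℋ) {A : Edge ℋ → ℕ} (hor : IsOrientation ℋ A)
    (hA : IsNested ℋ A) {H D : Edge ℋ} (hD : IsBlock ℋ H D) : IsNested ℋ (flipAt A H D) := by
  intro K L hKL hLK
  by_cases hL : H.1 ⊆ L.1 ∧ A L = A H
  · simp only [flipAt, hL, and_self, if_true] at hLK ⊢
    have hADH : A D ∈ H.1 := hD.prop.2.subset (hor D)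
    by_cases hHK : H.1 ⊆ K.1
    · have hAK : A K = A H := (hA K L hKL (hL.2 ▸ hHK (hor H))).trans hL.2
      simp [hHK, hAK]
    · have hKH : K.1 ⊂ H.1 := by
        have hmeet : (K.1 ∩ H.1).Nonempty := ⟨A D, Finset.mem_inter.mpr ⟨hLK, hADH⟩⟩
        rcases hlam K.1 K.2 H.1 H.2 L.1 L.2 hKL hL.1 hmeet with hle | hle
        · exact hle.ssubset_of_not_subset hHK
        · exact absurd hle hHK
      simp only [hHK, false_and, if_false]
      exact hA K D (hD.subset_of_mem hlam H.2 K.2 hKH hLK (hor D)) hLK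
  · simp only [flipAt, hL, if_false] at hLK ⊢
    have hAK : A K = A L := hA K L hKL hLK
    have hK : ¬(H.1 ⊆ K.1 ∧ A K = A H) := fun h ↦ hL ⟨h.1.trans hKL, hAK ▸ h.2⟩
    rw [if_neg hK, hAK]

theorem isIncFlip_flipAt (hℋ : IsHypergraph n ℋ) (hcap : ClosedUnderIntersection ℋ)
    {A : Edge ℋ → ℕ} (hor : IsOrientation ℋ A) (hA : IsNested ℋ A) {H D : Edge ℋ}
    (hDH : D.1 ⊆ H.1) (hlt : A H < A D) (hsep : ¬SameBlock ℋ H (A H) (A D)) :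
    IsIncFlip n ℋ (A H) (A D) A (flipAt A H D) := by
  have hflip : flipAt A H D H = A D := if_pos ⟨subset_rfl, rfl⟩
  have hHn := (hℋ.1 H.1 H.2).2
  have hADH : A D ∈ H.1 := hDH (hor D)
  refine ⟨fun h ↦ hlt.ne ((congrFun h H).trans hflip), (Finset.mem_Icc.mp (hHn (hor H))).1, hlt,
    (Finset.mem_Icc.mp (hHn hADH)).2, fun K ↦ ⟨fun hK ↦ ?_, fun hi hj ↦ ?_⟩⟩
  · by_cases h : H.1 ⊆ K.1 ∧ A K = A H
    · exact ⟨h.2, if_pos h⟩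
    · exact absurd (if_neg h).symm hK
  · have hHK : H.1 ⊆ K.1 := by
      rw [← Finset.inter_eq_left]
      by_contra hne
      refine hsep (.inr ⟨H.1 ∩ K.1, hcap _ H.2 _ K.2 ⟨A H, ?_⟩,
        Finset.inter_subset_left.ssubset_of_ne hne, ?_, ?_⟩) <;> simp [hi, hj, hor H, hADH]
    by_cases hAK : A K = A H
    · exact iff_of_true hAK (if_pos ⟨hHK, hAK⟩)
    · refine iff_of_false hAK fun h ↦ ?_
      have hAKD : A K = A D := by simpa [flipAt, hAK] using h
      have hAHK : A H = A K := hA H K hHK (hAKD ▸ hADH)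
      exact hAK hAHK.symm

theorem blockMin_flipAt (hlam : LocallyLaminar ℋ) {A : Edge ℋ → ℕ} (hor : IsOrientation ℋ A)
    {H D : Edge ℋ} (hDH : D.1 ⊆ H.1) :
    (fun K : Edge ℋ ↦ blockMin ℋ K.1 (flipAt A H D K)) =
      Function.update (fun K ↦ blockMin ℋ K.1 (A K)) H (blockMin ℋ H.1 (A D)) := by
  funext K
  rcases eq_or_ne K H with rfl | hKH
  · simp [flipAt]
  rw [Function.update_of_ne hKH]
  by_cases hK : H.1 ⊆ K.1 ∧ A K = A H
  · simp only [flipAt, hK, and_self, if_true]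
    have hssub : H.1 ⊂ K.1 := hK.1.ssubset_of_ne fun h ↦ hKH (Subtype.ext h.symm)
    exact (blockMin_eq_blockMin_iff hlam K.2).mpr (.inr ⟨H, H.2, hssub, hDH (hor D), hor H⟩)
  · simp only [flipAt, hK, if_false]

namespace HypergraphicPoset

variable {A B : HypergraphicPoset n ℋ}

/-- The vector recording, for each edge `H`, the block of `H` containing the value of `A`; the
block is encoded by its least element, so that blocks are compared from left to right. -/
noncomputable def blockVector (A : HypergraphicPoset n ℋ) : Edge ℋ → ℕ :=
  fun H ↦ blockMin ℋ H.1 (A H)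

theorem blockVector_injective (hlam : LocallyLaminar ℋ) :
    Function.Injective (blockVector : HypergraphicPoset n ℋ → Edge ℋ → ℕ) := by
  intro A B h
  have key (H : Finset ℕ) : ∀ hH : H ∈ ℋ, A ⟨H, hH⟩ = B ⟨H, hH⟩ := by
    induction H using Finset.strongInduction with
    | H H ih =>
    intro hH
    rcases (blockMin_eq_blockMin_iff hlam hH).mp (congrFun h ⟨H, hH⟩) with
      heq | ⟨K, hK, hKH, hAK, hBK⟩
    · exact heq
    · exact (A.acycOr.isNested ⟨K, hK⟩ ⟨H, hH⟩ hKH.subset hAK).symm.trans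
        ((ih K hKH hK).trans (B.acycOr.isNested ⟨K, hK⟩ ⟨H, hH⟩ hKH.subset hBK))
  exact HypergraphicPoset.ext (funext fun H ↦ key H.1 H.2)

theorem blockVector_mono (hℋ : IsIntervalHypergraph n ℋ) (h : A ≤ B) :
    blockVector A ≤ blockVector B :=
  fun H ↦ monotone_blockMin hℋ H.1 (apply_le_apply h H)

theorem exists_ge_blockVector_eq_update (hℋ : IsIntervalHypergraph n ℋ)
    (hcap : ClosedUnderIntersection ℋ) (hlam : LocallyLaminar ℋ) (A : HypergraphicPoset n ℋ)
    {H : Edge ℋ} {y : ℕ} (hy : y ∈ H.1) (hlt : blockVector A H < blockMin ℋ H.1 y) :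
    ∃ B, A ≤ B ∧ blockVector B = Function.update (blockVector A) H (blockMin ℋ H.1 y) := by
  have hne : H.1 ≠ {y} := fun h ↦ by
    have hAy : A H = y := by simpa [h] using A.apply_mem H
    exact hlt.ne (congrArg (blockMin ℋ H.1) hAy)
  obtain ⟨D, hD, hyD⟩ := hℋ.isHypergraph.exists_isBlock H.2 hy hne
  lift D to Edge ℋ using hD.prop.1
  have hDy : blockMin ℋ H.1 (A D) = blockMin ℋ H.1 y := (blockMin_eq_blockMin_iff hlam H.2).mpr
    (.inr ⟨D, D.2, hD.prop.2, A.apply_mem D, hyD⟩)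
  have hlt' : blockMin ℋ H.1 (A H) < blockMin ℋ H.1 (A D) := hDy ▸ hlt
  have hflip : AcycOr ℋ (flipAt A H D) :=
    acycOr_of_isNested hℋ hcap (isOrientation_flipAt A.acycOr.1 hD.prop.2.subset)
      (isNested_flipAt hlam A.acycOr.1 A.acycOr.isNested hD)
  have hinc : IsIncFlip n ℋ (A H) (A D) A (flipAt A H D) :=
    isIncFlip_flipAt hℋ.isHypergraph hcap A.acycOr.1 A.acycOr.isNested hD.prop.2.subset
      ((monotone_blockMin hℋ H.1).reflect_lt hlt')
      fun h ↦ hlt'.ne ((blockMin_eq_blockMin_iff hlam H.2).mpr h)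
  refine ⟨⟨_, hflip⟩, Relation.ReflTransGen.single ⟨A.acycOr, hflip, _, _, hinc⟩, ?_⟩
  rw [← hDy]
  exact blockMin_flipAt hlam A.acycOr.1 hD.prop.2.subset

theorem exists_ge_blockVector_eq (hℋ : IsIntervalHypergraph n ℋ)
    (hcap : ClosedUnderIntersection ℋ) (hlam : LocallyLaminar ℋ) (A : HypergraphicPoset n ℋ)
    {y : Edge ℋ → ℕ} (hy : IsOrientation ℋ y) (hle : ∀ H, blockVector A H ≤ blockMin ℋ H.1 (y H)) :
    ∃ B, A ≤ B ∧ ∀ H, blockVector B H = blockMin ℋ H.1 (y H) := by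
  have key (s : Finset (Edge ℋ)) : ∃ B, A ≤ B ∧ ∀ H, blockVector B H =
      if H ∈ s then blockMin ℋ H.1 (y H) else blockVector A H := by
    induction s using Finset.induction_on with
    | empty => exact ⟨A, le_rfl, by simp⟩
    | insert H s hH ih =>
      obtain ⟨B, hAB, hB⟩ := ih
      have hBH : blockVector B H = blockVector A H := by rw [hB, if_neg hH]
      obtain ⟨C, hBC, hC⟩ : ∃ C, B ≤ C ∧
          blockVector C = Function.update (blockVector B) H (blockMin ℋ H.1 (y H)) := by
        rcases (hBH.trans_le (hle H)).eq_or_lt with heq | hlt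
        · exact ⟨B, le_rfl, by rw [← heq, Function.update_eq_self]⟩
        · exact exists_ge_blockVector_eq_update hℋ hcap hlam B (hy H) hlt
      refine ⟨C, hAB.trans hBC, fun K ↦ ?_⟩
      rcases eq_or_ne K H with rfl | hKH
      · simp [hC]
      · simp [hC, hKH, hB]
  obtain ⟨B, hAB, hB⟩ := key Finset.univ
  exact ⟨B, hAB, by simpa using hB⟩

theorem blockVector_le_iff (hℋ : IsIntervalHypergraph n ℋ)
    (hcap : ClosedUnderIntersection ℋ) (hlam : LocallyLaminar ℋ) :
    blockVector A ≤ blockVector B ↔ A ≤ B := by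
  refine ⟨fun h ↦ ?_, blockVector_mono hℋ⟩
  obtain ⟨C, hAC, hC⟩ := exists_ge_blockVector_eq hℋ hcap hlam A B.acycOr.1 h
  rwa [← blockVector_injective hlam (funext hC : blockVector C = blockVector B)]

theorem exists_blockVector_eq (hℋ : IsIntervalHypergraph n ℋ)
    (hcap : ClosedUnderIntersection ℋ) (hlam : LocallyLaminar ℋ) {y : Edge ℋ → ℕ}
    (hy : IsOrientation ℋ y) :
    ∃ B : HypergraphicPoset n ℋ, ∀ H, blockVector B H = blockMin ℋ H.1 (y H) := by
  obtain ⟨B, -, hB⟩ := exists_ge_blockVector_eq hℋ hcap hlam (ofList hℋ.isHypergraph []) hy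
    fun H ↦ monotone_blockMin hℋ H.1 (ofList_nil_apply_le _ (hy H))
  exact ⟨B, hB⟩

theorem isDistribLattice_of_locallyLaminar (hℋ : IsIntervalHypergraph n ℋ)
    (hcap : ClosedUnderIntersection ℋ) (hlam : LocallyLaminar ℋ) :
    IsDistribLattice (HypergraphicPoset n ℋ) := by
  refine .of_orderEmbedding
    (.ofMapLEIff blockVector fun _ _ ↦ blockVector_le_iff hℋ hcap hlam) (fun A B ↦ ?_) fun A B ↦ ?_
  · obtain ⟨C, hC⟩ := exists_blockVector_eq hℋ hcap hlam (y := fun H ↦ max (A H) (B H))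
      fun H ↦ by rcases max_choice (A H) (B H) with h | h <;> simp only [h, apply_mem]
    exact ⟨C, funext fun H ↦ (hC H).trans (monotone_blockMin hℋ H.1).map_max⟩
  · obtain ⟨C, hC⟩ := exists_blockVector_eq hℋ hcap hlam (y := fun H ↦ min (A H) (B H))
      fun H ↦ by rcases min_choice (A H) (B H) with h | h <;> simp only [h, apply_mem]
    exact ⟨C, funext fun H ↦ (hC H).trans (monotone_blockMin hℋ H.1).map_min⟩

end HypergraphicPoset

end BlockVector

section Obstructions

variable {n p q : ℕ} {ℋ : Finset (Finset ℕ)} {I J : Finset ℕ}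

/-- The points of `[n]` up to `p`, with `p` first. -/
def lowerPoints (p : ℕ) : List ℕ := p :: List.Ico 1 p

/-- The points of `[n]` from `q` on, with `q` first. -/
def upperPoints (n q : ℕ) : List ℕ := q :: List.Ico (q + 1) (n + 1)

/-- The points of the open interval `(p, q)`. -/
def middlePoints (p q : ℕ) : List ℕ := List.Ico (p + 1) q

theorem mem_middlePoints {x : ℕ} : x ∈ middlePoints p q ↔ p < x ∧ x < q := List.Ico.mem

theorem le_of_mem_lowerPoints {x : ℕ} (hx : x ∈ lowerPoints p) : x ≤ p := by
  simp only [lowerPoints, List.mem_cons, List.Ico.mem] at hx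
  lia

theorem le_of_mem_upperPoints {x : ℕ} (hx : x ∈ upperPoints n q) : q ≤ x := by
  simp only [upperPoints, List.mem_cons, List.Ico.mem] at hx
  lia

theorem lt_of_mem_lower_middle : ∀ a ∈ lowerPoints p, ∀ b ∈ middlePoints p q, a < b :=
  fun _ ha _ hb ↦ (le_of_mem_lowerPoints ha).trans_lt (mem_middlePoints.mp hb).1

theorem lt_of_mem_lower_upper (hpq : p < q) : ∀ a ∈ lowerPoints p, ∀ b ∈ upperPoints n q, a < b :=
  fun _ ha _ hb ↦ (le_of_mem_lowerPoints ha).trans_lt (hpq.trans_le (le_of_mem_upperPoints hb))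

theorem lt_of_mem_middle_upper : ∀ a ∈ middlePoints p q, ∀ b ∈ upperPoints n q, a < b :=
  fun _ ha _ hb ↦ (mem_middlePoints.mp ha).2.trans_le (le_of_mem_upperPoints hb)

theorem IsHypergraph.lt_of_forall_lowerPoints_notMem (hℋ : IsHypergraph n ℋ) {H : Edge ℋ}
    (hH : ∀ x ∈ lowerPoints p, x ∉ H.1) {x : ℕ} (hx : x ∈ H.1) : p < x := by
  by_contra! hxp
  have hxn := Finset.mem_Icc.mp ((hℋ.1 H.1 H.2).2 hx)
  refine hH x ?_ hx
  simp only [lowerPoints, List.mem_cons, List.Ico.mem]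
  lia

theorem IsHypergraph.lt_of_forall_upperPoints_notMem (hℋ : IsHypergraph n ℋ) {H : Edge ℋ}
    (hH : ∀ x ∈ upperPoints n q, x ∉ H.1) {x : ℕ} (hx : x ∈ H.1) : x < q := by
  by_contra! hqx
  have hxn := Finset.mem_Icc.mp ((hℋ.1 H.1 H.2).2 hx)
  refine hH x ?_ hx
  simp only [upperPoints, List.mem_cons, List.Ico.mem]
  lia

theorem IsIntervalHypergraph.Ioo_mem (hℋ : IsIntervalHypergraph n ℋ) {H : Edge ℋ}
    (hlower : ∀ x ∈ lowerPoints p, x ∉ H.1) (hupper : ∀ x ∈ upperPoints n q, x ∉ H.1)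
    (hleft : p + 1 ∈ H.1) (hright : q - 1 ∈ H.1) : Finset.Ioo p q ∈ ℋ := by
  convert H.2
  ext x
  rw [Finset.mem_Ioo]
  exact ⟨fun hx ↦ hℋ.mem_of_le_of_le H.2 hleft hright (by lia) (by lia),
    fun hx ↦ ⟨hℋ.isHypergraph.lt_of_forall_lowerPoints_notMem hlower hx,
      hℋ.isHypergraph.lt_of_forall_upperPoints_notMem hupper hx⟩⟩

theorem IsIntervalHypergraph.endpoints_mem_or_forall_notMem
    (hℋ : IsIntervalHypergraph n ℋ) (hpq : p < q) (H : Edge ℋ) :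
    (∀ x ∈ lowerPoints p, x ∉ H.1) ∨ (∀ x ∈ upperPoints n q, x ∉ H.1) ∨ p ∈ H.1 ∧ q ∈ H.1 := by
  by_contra! ⟨⟨x, hx, hxH⟩, ⟨y, hy, hyH⟩, hends⟩
  have hxp := le_of_mem_lowerPoints hx
  have hqy := le_of_mem_upperPoints hy
  exact hends (hℋ.mem_of_le_of_le H.2 hxH hyH hxp (hpq.le.trans hqy))
    (hℋ.mem_of_le_of_le H.2 hxH hyH (hxp.trans hpq.le) hqy)

namespace HypergraphicPoset

theorem ofList_swap_eq_of_Ioo_notMem (hℋ : IsIntervalHypergraph n ℋ)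
    (hnot : Finset.Ioo p q ∉ ℋ) :
    ofList hℋ.isHypergraph (upperPoints n q ++ lowerPoints p ++ [p + 1, q - 1]) =
      ofList hℋ.isHypergraph (upperPoints n q ++ lowerPoints p ++ [q - 1, p + 1]) := by
  refine HypergraphicPoset.ext (funext fun H ↦ ?_)
  by_contra hne
  obtain ⟨hmiss, hleft, hright⟩ := forall_notMem_of_listOrientation_swap_ne hne
  simp only [List.mem_append, or_imp, forall_and] at hmiss
  exact hnot (hℋ.Ioo_mem hmiss.2 hmiss.1 hleft hright)

theorem ofList_pair_append_mem_upperBounds (hℋ : IsHypergraph n ℋ) {L R : List ℕ} {j k : ℕ}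
    (hjk : j < k) (hL : ∀ x ∈ L, x < j) :
    ofList hℋ ([k, j] ++ L ++ R) ∈
      upperBounds {ofList hℋ (L ++ [k, j] ++ R), ofList hℋ ([j] ++ L ++ [k] ++ R)} := by
  have hLkj : ∀ a ∈ L, ∀ b ∈ [k, j], a < b := by grind
  have hjLk : ∀ a ∈ [j] ++ L, ∀ b ∈ [k], a < b := by grind
  simp only [upperBounds_insert, upperBounds_singleton, Set.mem_inter_iff, Set.mem_Ici]
  exact ⟨ofList_swap_blocks_le hℋ hLkj [] R, ofList_swap_blocks_le hℋ hjLk [] R⟩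

theorem ofList_append_mem_upperBounds_of_swap_eq (hℋ : IsHypergraph n ℋ) {L R : List ℕ} {j k : ℕ}
    (hjk : j < k) (hL : ∀ x ∈ L, x < j) (hR : ∀ x ∈ R, k < x)
    (hswap : ofList hℋ (R ++ L ++ [j, k]) = ofList hℋ (R ++ L ++ [k, j])) :
    ofList hℋ (R ++ [j] ++ L ++ [k]) ∈
      upperBounds {ofList hℋ (L ++ [k, j] ++ R), ofList hℋ ([j] ++ L ++ [k] ++ R)} := by
  have hLkjR : ∀ a ∈ L ++ [k, j], ∀ b ∈ R, a < b := by grind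
  have hjLkR : ∀ a ∈ [j] ++ L ++ [k], ∀ b ∈ R, a < b := by grind
  have hLj : ∀ a ∈ L, ∀ b ∈ [j], a < b := by grind
  simp only [upperBounds_insert, upperBounds_singleton, Set.mem_inter_iff, Set.mem_Ici]
  refine ⟨?_, by simpa using ofList_swap_blocks_le hℋ hjLkR [] []⟩
  calc
    ofList hℋ (L ++ [k, j] ++ R) ≤ ofList hℋ (R ++ L ++ [k, j]) := by
      simpa using ofList_swap_blocks_le hℋ hLkjR [] []
    _ = ofList hℋ (R ++ L ++ [j] ++ [k]) := by simpa using hswap.symm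
    _ ≤ ofList hℋ (R ++ [j] ++ L ++ [k]) := ofList_swap_blocks_le hℋ hLj R [k]

theorem not_isLUB_ofList_of_swap_eq (hℋ : IsHypergraph n ℋ) {L R : List ℕ} {j k : ℕ}
    (hjk : j < k) (hL : ∀ x ∈ L, x < j) (hR : ∀ x ∈ R, k < x)
    (hswap : ofList hℋ (R ++ L ++ [j, k]) = ofList hℋ (R ++ L ++ [k, j])) {I J : Edge ℋ}
    (hj : j ∈ I.1 ∩ J.1) (hk : k ∈ I.1 ∩ J.1) (hRI : ∀ x ∈ R, x ∉ I.1) (hLJ : ∀ x ∈ L, x ∉ J.1)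
    (X : HypergraphicPoset n ℋ) :
    ¬IsLUB {ofList hℋ (L ++ [k, j] ++ R), ofList hℋ ([j] ++ L ++ [k] ++ R)} X := by
  intro hX
  rw [Finset.mem_inter] at hj hk
  have hXI : X I = j := by
    have lower : j ≤ X I := calc
      j = ofList hℋ ([j] ++ L ++ [k] ++ R) I := by simp [listOrientation_cons_of_mem hj.1]
      _ ≤ X I := apply_le_apply (hX.1 (Set.mem_insert_of_mem _ rfl)) I
    have upper : X I ≤ j := calc
      X I ≤ ofList hℋ (R ++ [j] ++ L ++ [k]) I :=
        apply_le_apply (hX.2 (ofList_append_mem_upperBounds_of_swap_eq hℋ hjk hL hR hswap)) I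
      _ = j := by
        simp [listOrientation_append_of_forall_left hRI, listOrientation_cons_of_mem hj.1]
    exact upper.antisymm lower
  have hXJ : X J = k := by
    have lower : k ≤ X J := calc
      k = ofList hℋ (L ++ [k, j] ++ R) J := by
        simp [listOrientation_append_of_forall_left hLJ, listOrientation_cons_of_mem hk.2]
      _ ≤ X J := apply_le_apply (hX.1 (Set.mem_insert _ _)) J
    have upper : X J ≤ k := calc
      X J ≤ ofList hℋ ([k, j] ++ L ++ R) J :=
        apply_le_apply (hX.2 (ofList_pair_append_mem_upperBounds hℋ hjk hL)) J
      _ = k := by simp [listOrientation_cons_of_mem hk.2]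
    exact upper.antisymm lower
  refine hjk.ne (hXI ▸ hXJ ▸ X.acycOr.eq_of_mem_of_mem ?_ ?_)
  · rw [hXI]; exact hj.2
  · rw [hXJ]; exact hk.1

theorem inter_mem_of_isCrossing (hℋ : IsIntervalHypergraph n ℋ)
    (hsup : ∀ A B : HypergraphicPoset n ℋ, ∃ C, IsLUB {A, B} C) (hI : I ∈ ℋ) (hJ : J ∈ ℋ)
    (hIJ : IsCrossing p q I J) : I ∩ J ∈ ℋ := by
  by_contra hnot
  rw [hIJ.inter_eq] at hnot
  have hlt : p + 1 < q - 1 := by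
    have hmem := Finset.mem_Icc.mp
      ((hℋ.isHypergraph.1 I hI).2 (Finset.mem_inter.mp hIJ.succ_mem_inter).1)
    have hne : Finset.Ioo p q ≠ {p + 1} := fun h ↦ hnot (h ▸ hℋ.2 _ hmem.1 hmem.2)
    contrapose! hne
    ext x
    have := hIJ.succ_lt
    rw [Finset.mem_Ioo, Finset.mem_singleton]
    lia
  have hL : ∀ x ∈ lowerPoints p, x < p + 1 := fun x hx ↦
    Nat.lt_succ_of_le (le_of_mem_lowerPoints hx)
  have hR : ∀ x ∈ upperPoints n q, q - 1 < x := fun x hx ↦ by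
    have := le_of_mem_upperPoints hx
    lia
  have hRI : ∀ x ∈ upperPoints n q, x ∉ I := fun x hx hxI ↦
    (hIJ.lt_of_mem_left hℋ hI hxI).not_ge (le_of_mem_upperPoints hx)
  have hLJ : ∀ x ∈ lowerPoints p, x ∉ J := fun x hx hxJ ↦
    (hIJ.lt_of_mem_right hℋ hJ hxJ).not_ge (le_of_mem_lowerPoints hx)
  obtain ⟨X, hX⟩ := hsup _ _
  exact not_isLUB_ofList_of_swap_eq hℋ.isHypergraph hlt hL hR
    (ofList_swap_eq_of_Ioo_notMem hℋ hnot) (I := ⟨I, hI⟩) (J := ⟨J, hJ⟩) hIJ.succ_mem_inter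
    hIJ.pred_mem_inter hRI hLJ X hX

theorem closedUnderIntersection_of_exists_isLUB (hℋ : IsIntervalHypergraph n ℋ)
    (hsup : ∀ A B : HypergraphicPoset n ℋ, ∃ C, IsLUB {A, B} C) : ClosedUnderIntersection ℋ := by
  refine closedUnderIntersection_of_forall_not_subset fun I hI J hJ hIJ hJI hne ↦ ?_
  obtain ⟨p, q, hpq | hpq⟩ := hℋ.exists_isCrossing hI hJ hIJ hJI hne
  · exact inter_mem_of_isCrossing hℋ hsup hI hJ hpq
  · exact Finset.inter_comm J I ▸ inter_mem_of_isCrossing hℋ hsup hJ hI hpq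

section Pentagon

variable (hℋ : IsHypergraph n ℋ) {L M R : List ℕ}

theorem ofList_reverse_mem_upperBounds (hLM : ∀ a ∈ L, ∀ b ∈ M, a < b)
    (hLR : ∀ a ∈ L, ∀ b ∈ R, a < b) (hMR : ∀ a ∈ M, ∀ b ∈ R, a < b) :
    ofList hℋ (R ++ M ++ L) ∈
      upperBounds {ofList hℋ (L ++ R ++ M), ofList hℋ (M ++ L ++ R)} := by
  have y_le := (ofList_swap_blocks_le hℋ hLR [] M).trans (ofList_swap_append_le hℋ hLM R)
  have z_le := (ofList_swap_append_le hℋ hLR M).trans (ofList_swap_blocks_le hℋ hMR [] L)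
  simp only [upperBounds_insert, upperBounds_singleton, Set.mem_inter_iff, Set.mem_Ici]
  exact ⟨y_le, z_le⟩

theorem ofList_sorted_mem_lowerBounds (hLM : ∀ a ∈ L, ∀ b ∈ M, a < b)
    (hLR : ∀ a ∈ L, ∀ b ∈ R, a < b) (hMR : ∀ a ∈ M, ∀ b ∈ R, a < b) :
    ofList hℋ (L ++ M ++ R) ∈
      lowerBounds {ofList hℋ (R ++ L ++ M), ofList hℋ (M ++ L ++ R)} := by
  have le_x := (ofList_swap_append_le hℋ hMR L).trans (ofList_swap_blocks_le hℋ hLR [] M)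
  have le_z := ofList_swap_blocks_le hℋ hLM [] R
  simp only [lowerBounds_insert, lowerBounds_singleton, Set.mem_inter_iff, Set.mem_Iic]
  exact ⟨le_x, le_z⟩

end Pentagon

theorem listOrientation_upperPoints_append {H : Edge ℋ} (hq : q ∈ H.1) (l : List ℕ) :
    listOrientation ℋ (upperPoints n q ++ l) H = q :=
  listOrientation_cons_of_mem hq _

theorem listOrientation_lowerPoints_append {H : Edge ℋ} (hp : p ∈ H.1) (l : List ℕ) :
    listOrientation ℋ (lowerPoints p ++ l) H = p :=
  listOrientation_cons_of_mem hp _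

theorem listOrientation_middlePoints_append_mem {H : Edge ℋ} (hpq : p + 1 < q)
    (hH : p + 1 ∈ H.1) (l : List ℕ) :
    p < listOrientation ℋ (middlePoints p q ++ l) H ∧
      listOrientation ℋ (middlePoints p q ++ l) H < q := by
  have hmid : ∃ x ∈ middlePoints p q, x ∈ H.1 :=
    ⟨p + 1, mem_middlePoints.mpr ⟨Nat.lt_succ_self p, hpq⟩, hH⟩
  rw [listOrientation_append_of_exists hmid]
  exact mem_middlePoints.mp (listOrientation_mem_list hmid)

theorem apply_eq_right_of_isCrossing (hℋ : IsIntervalHypergraph n ℋ) {I J : Edge ℋ}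
    (hIJ : IsCrossing p q I.1 J.1) {D : HypergraphicPoset n ℋ} (hJ : D J = q) {H : Edge ℋ}
    (hq : q ∈ H.1) (hlt : p < D H) (hle : D H ≤ q) : D H = q := by
  have hDJ : D H ∈ J.1 := hℋ.mem_of_le_of_le J.2 (Finset.mem_inter.mp hIJ.succ_mem_inter).2
    hIJ.right_mem hlt hle
  exact (D.acycOr.eq_of_mem_of_mem hDJ (hJ ▸ hq)).trans hJ

theorem apply_eq_left_of_isCrossing (hℋ : IsIntervalHypergraph n ℋ) {I J : Edge ℋ}
    (hIJ : IsCrossing p q I.1 J.1) {D : HypergraphicPoset n ℋ} (hI : D I = p) {H : Edge ℋ}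
    (hp : p ∈ H.1) (hle : p ≤ D H) (hlt : D H < q) : D H = p := by
  have hDI : D H ∈ I.1 := hℋ.mem_of_le_of_le I.2 hIJ.left_mem
    (Finset.mem_inter.mp hIJ.pred_mem_inter).1 hle (Nat.le_sub_one_of_lt hlt)
  exact (D.acycOr.eq_of_mem_of_mem hDI (hI ▸ hp)).trans hI

theorem minimal_upperBounds_of_isCrossing (hℋ : IsIntervalHypergraph n ℋ) {I J : Edge ℋ}
    (hIJ : IsCrossing p q I.1 J.1) :
    Minimal (· ∈ upperBounds
        {ofList hℋ.isHypergraph (lowerPoints p ++ upperPoints n q ++ middlePoints p q),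
          ofList hℋ.isHypergraph (middlePoints p q ++ lowerPoints p ++ upperPoints n q)})
      (ofList hℋ.isHypergraph (upperPoints n q ++ middlePoints p q ++ lowerPoints p)) := by
  have hpq := hIJ.succ_lt
  refine ⟨ofList_reverse_mem_upperBounds _ lt_of_mem_lower_middle
    (lt_of_mem_lower_upper hIJ.lt) lt_of_mem_middle_upper, fun D hD hDT ↦ ?_⟩
  have hyD := hD (Set.mem_insert _ _)
  have hzD := hD (Set.mem_insert_of_mem _ rfl)
  have eq_of_lower {H : Edge ℋ} (hH : ∀ x ∈ lowerPoints p, x ∉ H.1) :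
      D H = ofList hℋ.isHypergraph (upperPoints n q ++ middlePoints p q ++ lowerPoints p) H := by
    refine (apply_le_apply hDT H).antisymm (Eq.trans_le ?_ (apply_le_apply hyD H))
    simp only [ofList_toFun, List.append_assoc (lowerPoints p),
      listOrientation_append_of_forall_left hH, listOrientation_append_of_forall_right hH]
  refine (HypergraphicPoset.ext (funext fun H ↦ ?_)).ge
  rcases hℋ.endpoints_mem_or_forall_notMem hIJ.lt H with hlow | hupp | ⟨hp, hq⟩
  · exact eq_of_lower hlow
  · refine (apply_le_apply hDT H).antisymm (Eq.trans_le ?_ (apply_le_apply hzD H))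
    simp only [ofList_toFun, List.append_assoc (upperPoints n q),
      listOrientation_append_of_forall_left hupp, listOrientation_append_of_forall_right hupp]
  · have hmid : p + 1 ∈ H.1 := hℋ.mem_of_le_of_le H.2 hp hq (Nat.le_succ p) hpq.le
    have hTH := apply_le_apply hDT H
    have hzH := apply_le_apply hzD H
    have hTJ := eq_of_lower fun x hx hxJ ↦
      (hIJ.lt_of_mem_right hℋ J.2 hxJ).not_ge (le_of_mem_lowerPoints hx)
    simp only [ofList_toFun, List.append_assoc, listOrientation_upperPoints_append hq,
      listOrientation_upperPoints_append hIJ.right_mem] at hTH hzH hTJ ⊢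
    exact apply_eq_right_of_isCrossing hℋ hIJ hTJ hq
      ((listOrientation_middlePoints_append_mem hpq hmid _).1.trans_le hzH) hTH

theorem maximal_lowerBounds_of_isCrossing (hℋ : IsIntervalHypergraph n ℋ) {I J : Edge ℋ}
    (hIJ : IsCrossing p q I.1 J.1) :
    Maximal (· ∈ lowerBounds
        {ofList hℋ.isHypergraph (upperPoints n q ++ lowerPoints p ++ middlePoints p q),
          ofList hℋ.isHypergraph (middlePoints p q ++ lowerPoints p ++ upperPoints n q)})
      (ofList hℋ.isHypergraph (lowerPoints p ++ middlePoints p q ++ upperPoints n q)) := by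
  have hpq := hIJ.succ_lt
  refine ⟨ofList_sorted_mem_lowerBounds _ lt_of_mem_lower_middle
    (lt_of_mem_lower_upper hIJ.lt) lt_of_mem_middle_upper, fun D hD hBD ↦ ?_⟩
  have hDx := hD (Set.mem_insert _ _)
  have hDz := hD (Set.mem_insert_of_mem _ rfl)
  have eq_of_upper {H : Edge ℋ} (hH : ∀ x ∈ upperPoints n q, x ∉ H.1) :
      D H = ofList hℋ.isHypergraph (lowerPoints p ++ middlePoints p q ++ upperPoints n q) H := by
    refine ((apply_le_apply hDx H).trans_eq ?_).antisymm (apply_le_apply hBD H)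
    simp only [ofList_toFun, List.append_assoc (upperPoints n q),
      listOrientation_append_of_forall_left hH, listOrientation_append_of_forall_right hH]
  refine (HypergraphicPoset.ext (funext fun H ↦ ?_)).le
  rcases hℋ.endpoints_mem_or_forall_notMem hIJ.lt H with hlow | hupp | ⟨hp, hq⟩
  · refine ((apply_le_apply hDz H).trans_eq ?_).antisymm (apply_le_apply hBD H)
    simp only [ofList_toFun, listOrientation_append_append_of_forall_middle hlow,
      List.append_assoc (lowerPoints p), listOrientation_append_of_forall_left hlow]
  · exact eq_of_upper hupp
  · have hmid : p + 1 ∈ H.1 := hℋ.mem_of_le_of_le H.2 hp hq (Nat.le_succ p) hpq.le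
    have hBH := apply_le_apply hBD H
    have hzH := apply_le_apply hDz H
    have hBI := eq_of_upper fun x hx hxI ↦
      (hIJ.lt_of_mem_left hℋ I.2 hxI).not_ge (le_of_mem_upperPoints hx)
    simp only [ofList_toFun, List.append_assoc, listOrientation_lowerPoints_append hp,
      listOrientation_lowerPoints_append hIJ.left_mem] at hBH hzH hBI ⊢
    exact apply_eq_left_of_isCrossing hℋ hIJ hBI hp hBH
      (hzH.trans_lt (listOrientation_middlePoints_append_mem hpq hmid _).2)

theorem not_isDistribLattice_of_isCrossing (hℋ : IsIntervalHypergraph n ℋ) {I J K : Edge ℋ}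
    (hIJ : IsCrossing p q I.1 J.1) (hp : p ∈ K.1) (hq : q ∈ K.1) :
    ¬IsDistribLattice (HypergraphicPoset n ℋ) := by
  intro h
  have hyx := h.eq_of_pentagon
    (ofList_swap_append_le _ lt_of_mem_middle_upper _)
    (ofList_swap_blocks_le _ (lt_of_mem_lower_upper hIJ.lt) [] _)
    (ofList_swap_append_le _ lt_of_mem_lower_middle _)
    (minimal_upperBounds_of_isCrossing hℋ hIJ) (maximal_lowerBounds_of_isCrossing hℋ hIJ)
  have hK := congrArg (toFun · K) hyx
  simp only [ofList_toFun, List.nil_append, List.append_assoc,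
    listOrientation_lowerPoints_append hp, listOrientation_upperPoints_append hq] at hK
  exact hIJ.lt.ne hK

theorem locallyLaminar_of_isDistribLattice (hℋ : IsIntervalHypergraph n ℋ)
    (h : IsDistribLattice (HypergraphicPoset n ℋ)) : LocallyLaminar ℋ := by
  intro I hI J hJ K hK hIK hJK hne
  by_contra! hnot
  obtain ⟨p, q, hpq | hpq⟩ := hℋ.exists_isCrossing hI hJ hnot.1 hnot.2 hne
  · exact not_isDistribLattice_of_isCrossing hℋ (I := ⟨I, hI⟩) (J := ⟨J, hJ⟩) (K := ⟨K, hK⟩) hpq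
      (hIK hpq.left_mem) (hJK hpq.right_mem) h
  · exact not_isDistribLattice_of_isCrossing hℋ (I := ⟨J, hJ⟩) (J := ⟨I, hI⟩) (K := ⟨K, hK⟩) hpq
      (hJK hpq.left_mem) (hIK hpq.right_mem) h

end HypergraphicPoset

end Obstructions

/-- For an interval hypergraph `𝕀` on `[n]`, the hypergraphic poset
`P_𝕀` is a distributive lattice if and only if for all `I, J ∈ 𝕀` with `I ⊈ J`, `J ⊈ I`
and `I ∩ J ≠ ∅`, the intersection `I ∩ J` belongs to `𝕀` and is initial or final in
every `K ∈ 𝕀` containing it. -/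
theorem stmt1 (n : ℕ) (hn : 1 ≤ n) (𝕀 : Finset (Finset ℕ))
    (h𝕀 : IsIntervalHypergraph n 𝕀) :
    (∃ join meet : (Edge 𝕀 → ℕ) → (Edge 𝕀 → ℕ) → Edge 𝕀 → ℕ,
      (∀ A B, AcycOr 𝕀 A → AcycOr 𝕀 B →
        (AcycOr 𝕀 (join A B) ∧ leP n 𝕀 A (join A B) ∧ leP n 𝕀 B (join A B) ∧
          ∀ D, AcycOr 𝕀 D → leP n 𝕀 A D → leP n 𝕀 B D → leP n 𝕀 (join A B) D) ∧
        (AcycOr 𝕀 (meet A B) ∧ leP n 𝕀 (meet A B) A ∧ leP n 𝕀 (meet A B) B ∧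
          ∀ D, AcycOr 𝕀 D → leP n 𝕀 D A → leP n 𝕀 D B → leP n 𝕀 D (meet A B))) ∧
      ∀ A B C, AcycOr 𝕀 A → AcycOr 𝕀 B → AcycOr 𝕀 C →
        join A (meet B C) = meet (join A B) (join A C)) ↔
    IsDistribHG 𝕀 := by
  rw [← HypergraphicPoset.isDistribLattice_iff, isDistribHG_iff h𝕀]
  constructor
  · intro h
    exact ⟨HypergraphicPoset.closedUnderIntersection_of_exists_isLUB h𝕀 h.exists_isLUB,
      HypergraphicPoset.locallyLaminar_of_isDistribLattice h𝕀 h⟩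
  · rintro ⟨hcap, hlam⟩
    exact HypergraphicPoset.isDistribLattice_of_locallyLaminar h𝕀 hcap hlam

end IHL
end

section
/- Let 𝕀 be an interval hypergraph on [n] and A an acyclic orientation of 𝕀. Then the fiber Or⁻¹(A) = {π : Or_π = A} is a nonempty interval [σ, τ] of the weak order on permutations of [n] (i.e., there exist σ, τ ∈ Or⁻¹(A) with Or⁻¹(A) = {π : σ ≤ π ≤ τ in the weak order}), whose minimum σ avoids the pattern 231 and whose maximum τ avoids the pattern 213. -/
namespace IHL

/-!
The fiber of `A` consists of the linear extensions of the strict order `≺_A = prec 𝕀 A`. As the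
hyperedges are intervals, `a ≺_A b` forces `a ≺_A c` for every `c ≠ a` between `a` and `b`. This
property is exactly what makes it transitive to compare two labels by `≺_A`, and by size when they
are incomparable: sorting the incomparable pairs increasingly gives the linear extension `σ` with
the fewest inversions, and sorting them decreasingly gives `τ`, the one with the most. In either
of them a forbidden pattern, with letters `a`, `b`, `c` in this order, has `a` between `b` and `c`
and `b ≺_A c`, hence `b ≺_A a`, although `a` is listed before `b`.
-/

section TieBreak

variable {α : Type*} {r s : α → α → Prop} {a b c : α}

/-- The relation that compares by `r` and falls back on `s` for pairs that `r` does not compare. -/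
def tieBreak (r s : α → α → Prop) (a b : α) : Prop :=
  r a b ∨ s a b ∧ ¬r b a

/-- Each set `{a} ∪ {b | r a b}` is convex for the strict total order `s`. This is the property
of `prec 𝕀 A`, for intervals `𝕀`, that makes `tieBreak` transitive. It is symmetric under
reversing `s`, so it serves both the increasing and the decreasing tie-break. -/
def BetweenClosed (r s : α → α → Prop) : Prop :=
  ∀ ⦃a b c⦄, r a b → (s a c ∧ s c b ∨ s b c ∧ s c a) → r a c

theorem tieBreak_iff_of_gt [Std.Asymm s] (h : s b a) : tieBreak r s a b ↔ r a b :=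
  or_iff_left fun hab => Std.Asymm.asymm _ _ h hab.1

theorem tieBreak_iff_not_of_lt [Std.Asymm r] (h : s a b) : tieBreak r s a b ↔ ¬r b a :=
  ⟨fun hab => hab.elim (Std.Asymm.asymm _ _) And.right, fun hba => .inr ⟨h, hba⟩⟩

theorem not_tieBreak_of_rel [Std.Asymm r] (h : r a b) : ¬tieBreak r s b a :=
  fun hba => hba.elim (Std.Asymm.asymm _ _ h) fun hba => hba.2 h

theorem BetweenClosed.swap (h : BetweenClosed r s) : BetweenClosed r (Function.swap s) :=
  fun _ _ _ hab hc => h hab (hc.symm.imp And.symm And.symm)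

theorem BetweenClosed.tieBreak_trans [IsTrans α r] [IsTrans α s] [Std.Trichotomous s]
    (h : BetweenClosed r s) (hab : tieBreak r s a b) (hbc : tieBreak r s b c) :
    tieBreak r s a c := by
  rcases hab with hab | ⟨sab, hba⟩ <;> rcases hbc with hbc | ⟨sbc, hcb⟩
  · exact .inl (_root_.trans hab hbc)
  · have hca : ¬r c a := fun hca => hcb (_root_.trans hca hab)
    rcases trichotomous_of s a c with sac | rfl | sca
    · exact .inr ⟨sac, hca⟩
    · exact absurd hab hcb
    · exact .inl (h hab (.inr ⟨sbc, sca⟩))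
  · have hca : ¬r c a := fun hca => hba (_root_.trans hbc hca)
    rcases trichotomous_of s a c with sac | rfl | sca
    · exact .inr ⟨sac, hca⟩
    · exact absurd hbc hba
    · exact absurd (h hbc (.inr ⟨sca, sab⟩)) hba
  · exact .inr ⟨_root_.trans sab sbc, fun hca => hcb (h hca (.inr ⟨sab, sbc⟩))⟩

theorem BetweenClosed.isStrictTotalOrder_tieBreak [IsStrictOrder α r] [IsStrictTotalOrder α s]
    (h : BetweenClosed r s) : IsStrictTotalOrder α (tieBreak r s) where
  irrefl a := by simp [tieBreak, irrefl a]
  trans _ _ _ := h.tieBreak_trans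
  trichotomous a b hab hba := by
    simp only [tieBreak, not_or, not_and_not_right] at hab hba
    exact Std.Trichotomous.trichotomous (r := s) a b
      (fun sab => hba.1 (hab.2 sab)) (fun sba => hab.1 (hba.2 sba))

theorem BetweenClosed.not_tieBreak_of_tieBreak [Std.Asymm r] [IsStrictOrder α s]
    (h : BetweenClosed r s) (hca : s c a) (hab : s a b) (hbc : tieBreak r s b c) :
    ¬tieBreak r s a b :=
  have rbc : r b c := (tieBreak_iff_of_gt (_root_.trans hca hab)).1 hbc
  not_tieBreak_of_rel (h rbc (.inr ⟨hca, hab⟩))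

end TieBreak

section Listing

theorem nonempty_relIso_of_isStrictTotalOrder {α : Type*} [Finite α] (r s : α → α → Prop)
    [IsStrictTotalOrder α r] [IsStrictTotalOrder α s] : Nonempty (r ≃r s) := by
  have := Fintype.ofFinite α
  have : IsWellOrder α r := { wf := Finite.wellFounded_of_trans_of_irrefl r }
  have : IsWellOrder α s := { wf := Finite.wellFounded_of_trans_of_irrefl s }
  rw [← Ordinal.type_eq, Ordinal.type_fintype, Ordinal.type_fintype]

variable {α : Type*} [LinearOrder α] {S : Finset α} {r s : α → α → Prop} {π : Equiv.Perm α}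

/-- `π` is a linear extension of `r`: read as the word `π 1, π 2, …`, it lists `a` before `b`
whenever `r a b`. -/
def IsLinearExtension (r : α → α → Prop) (π : Equiv.Perm α) : Prop :=
  ∀ ⦃a b⦄, r a b → π.symm a < π.symm b

/-- Read as a word, `π` lists the elements of `S` in the order `L`. -/
def IsListing (S : Finset α) (L : α → α → Prop) (π : Equiv.Perm α) : Prop :=
  ∀ ⦃a b⦄, a ∈ S → b ∈ S → (π.symm a < π.symm b ↔ L a b)

theorem exists_isListing (S : Finset α) (L : α → α → Prop) [IsStrictTotalOrder α L] :
    ∃ π : Equiv.Perm α, (∀ x ∉ S, π x = x) ∧ IsListing S L π := by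
  have : IsStrictTotalOrder S (Subrel L (· ∈ S)) :=
    (Subrel.relEmbedding L (· ∈ S)).isStrictTotalOrder
  obtain ⟨e⟩ := nonempty_relIso_of_isStrictTotalOrder (α := S) (· < ·) (Subrel L (· ∈ S))
  refine ⟨Equiv.Perm.ofSubtype e.toEquiv,
    fun x hx => Equiv.Perm.ofSubtype_apply_of_not_mem _ hx, fun a b ha hb => ?_⟩
  have symm_apply (x : α) (hx : x ∈ S) :
      (Equiv.Perm.ofSubtype e.toEquiv).symm x = e.symm ⟨x, hx⟩ := by
    rw [Equiv.symm_apply_eq, Equiv.Perm.ofSubtype_apply_coe]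
    simp
  rw [symm_apply a ha, symm_apply b hb]
  exact e.symm.map_rel_iff

theorem IsListing.isLinearExtension (hπ : IsListing S (tieBreak r s) π)
    (hr : ∀ ⦃a b⦄, r a b → a ∈ S ∧ b ∈ S) : IsLinearExtension r π :=
  fun _ _ hab => (hπ (hr hab).1 (hr hab).2).2 (.inl hab)

theorem IsListing.not_first_between [Std.Asymm r] [IsStrictOrder α s]
    (hπ : IsListing S (tieBreak r s) π) (h : BetweenClosed r s) {i j k : α} (hij : i < j)
    (hjk : j < k) (hi : π i ∈ S) (hj : π j ∈ S) (hk : π k ∈ S) :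
    ¬(s (π k) (π i) ∧ s (π i) (π j)) := by
  rintro ⟨hki, hij_s⟩
  have listed_ij : tieBreak r s (π i) (π j) := (hπ hi hj).1 (by simpa using hij)
  have listed_jk : tieBreak r s (π j) (π k) := (hπ hj hk).1 (by simpa using hjk)
  exact h.not_tieBreak_of_tieBreak hki hij_s listed_jk listed_ij

end Listing

section WeakOrder

variable {n : ℕ} {r : ℕ → ℕ → Prop} {π σ τ : Equiv.Perm ℕ}

theorem IsPermOn.apply_mem (hπ : IsPermOn n π) {i : ℕ} (hi : i ∈ Finset.Icc 1 n) :
    π i ∈ Finset.Icc 1 n := by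
  by_contra h
  exact h ((π.injective (hπ _ h)).symm ▸ hi)

theorem IsListing.weakLe_left_iff (hσ : IsListing (Finset.Icc 1 n) (tieBreak r (· < ·)) σ) :
    weakLe n σ π ↔ ∀ a b, 1 ≤ a → a < b → b ≤ n → r b a → π.symm b < π.symm a := by
  refine forall₅_congr fun a b ha hab hb => imp_congr_left ?_
  rw [hσ (Finset.mem_Icc.2 (by lia)) (Finset.mem_Icc.2 (by lia)), tieBreak_iff_of_gt hab]

theorem IsListing.weakLe_right_iff [Std.Asymm r]
    (hτ : IsListing (Finset.Icc 1 n) (tieBreak r (· > ·)) τ) :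
    weakLe n π τ ↔ ∀ a b, 1 ≤ a → a < b → b ≤ n → r a b → π.symm a < π.symm b := by
  refine forall₅_congr fun a b ha hab hb => ?_
  have hne : π.symm a ≠ π.symm b := π.symm.injective.ne hab.ne
  rw [hτ (Finset.mem_Icc.2 (by lia)) (Finset.mem_Icc.2 (by lia)),
    tieBreak_iff_not_of_lt (s := (· > ·)) hab, imp_not_comm, not_lt, hne.le_iff_lt]

theorem isLinearExtension_iff_weakLe [Std.Asymm r]
    (hr : ∀ ⦃a b⦄, r a b → a ∈ Finset.Icc 1 n ∧ b ∈ Finset.Icc 1 n)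
    (hσ : IsListing (Finset.Icc 1 n) (tieBreak r (· < ·)) σ)
    (hτ : IsListing (Finset.Icc 1 n) (tieBreak r (· > ·)) τ) :
    IsLinearExtension r π ↔ weakLe n σ π ∧ weakLe n π τ := by
  rw [hσ.weakLe_left_iff, hτ.weakLe_right_iff]
  refine ⟨fun h => ⟨fun a b _ _ _ hba => h hba, fun a b _ _ _ hab => h hab⟩, ?_⟩
  rintro ⟨hdesc, hasc⟩ a b hab
  obtain ⟨ha, hb⟩ := hr hab
  rw [Finset.mem_Icc] at ha hb
  rcases lt_trichotomy a b with hlt | rfl | hgt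
  · exact hasc a b ha.1 hlt hb.2 hab
  · exact absurd hab (irrefl a)
  · exact hdesc b a hb.1 hgt ha.2 hab

theorem IsListing.not_contains231 [Std.Asymm r] (hσn : IsPermOn n σ)
    (hσ : IsListing (Finset.Icc 1 n) (tieBreak r (· < ·)) σ) (h : BetweenClosed r (· < ·)) :
    ¬Contains231 n σ := by
  rintro ⟨i, j, k, hi, hij, hjk, hk, hpattern⟩
  exact hσ.not_first_between h hij hjk (hσn.apply_mem (Finset.mem_Icc.2 (by lia)))
    (hσn.apply_mem (Finset.mem_Icc.2 (by lia))) (hσn.apply_mem (Finset.mem_Icc.2 (by lia)))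
    hpattern

theorem IsListing.not_contains213 [Std.Asymm r] (hτn : IsPermOn n τ)
    (hτ : IsListing (Finset.Icc 1 n) (tieBreak r (· > ·)) τ) (h : BetweenClosed r (· > ·)) :
    ¬Contains213 n τ := by
  rintro ⟨i, j, k, hi, hij, hjk, hk, hji, hik⟩
  exact hτ.not_first_between h hij hjk (hτn.apply_mem (Finset.mem_Icc.2 (by lia)))
    (hτn.apply_mem (Finset.mem_Icc.2 (by lia))) (hτn.apply_mem (Finset.mem_Icc.2 (by lia)))
    ⟨hik, hji⟩

end WeakOrder

section Orientation

theorem exists_seq_of_transGen {α : Type*} {r : α → α → Prop} {a b : α}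
    (h : Relation.TransGen r a b) :
    ∃ (k : ℕ) (f : ℕ → α), 1 ≤ k ∧ f 0 = a ∧ f k = b ∧ ∀ i < k, r (f i) (f (i + 1)) := by
  induction h using Relation.TransGen.head_induction_on with
  | @single a hab => exact ⟨1, fun i => i.casesOn a fun _ => b, le_rfl, rfl, rfl, by simpa⟩
  | @head a c hac _ ih =>
    obtain ⟨k, f, -, rfl, hb, hf⟩ := ih
    refine ⟨k + 1, fun i => i.casesOn a f, by lia, rfl, hb, ?_⟩
    rintro (_ | i) hi
    · exact hac
    · exact hf i (by lia)

variable {𝕀 : Finset (Finset ℕ)} {A : Edge 𝕀 → ℕ} {a b c : ℕ}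

theorem exists_transGen_edge_of_prec (h : prec 𝕀 A a b) :
    ∃ H : Edge 𝕀, A H = a ∧ ∀ K : Edge 𝕀, A K = b →
      Relation.TransGen (fun H H' : Edge 𝕀 => A H' ∈ H.1 ∧ A H' ≠ A H) H K := by
  induction h using Relation.TransGen.head_induction_on with
  | single h =>
    obtain ⟨H, rfl, hbH⟩ := h
    exact ⟨H, rfl, fun K hK => .single (hK ▸ hbH)⟩
  | head h _ ih =>
    obtain ⟨H, rfl, hcH⟩ := h
    obtain ⟨H', rfl, hH'⟩ := ih
    exact ⟨H, rfl, fun K hK => .head hcH (hH' K hK)⟩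

theorem IsAcyclic.not_prec_self (hA : IsAcyclic 𝕀 A) (a : ℕ) : ¬prec 𝕀 A a a := by
  intro haa
  obtain ⟨H, hH, path⟩ := exists_transGen_edge_of_prec haa
  obtain ⟨k, f, hk, hf0, hfk, hf⟩ := exists_seq_of_transGen (path H hH)
  have hk_ne_one : k ≠ 1 := by
    rintro rfl
    exact (hf 0 one_pos).2 (by rw [zero_add, hfk, hf0])
  exact hA ⟨k, f, by lia, hfk.trans hf0.symm, hf⟩

theorem IsAcyclic.isStrictOrder_prec (hA : IsAcyclic 𝕀 A) : IsStrictOrder ℕ (prec 𝕀 A) where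
  irrefl := hA.not_prec_self
  trans _ _ _ := Relation.TransGen.trans

theorem IsOrientation.mem_of_prec (hA : IsOrientation 𝕀 A) {S : Finset ℕ}
    (hS : ∀ H ∈ 𝕀, H ⊆ S) (h : prec 𝕀 A a b) : a ∈ S ∧ b ∈ S := by
  obtain ⟨_, ⟨H, rfl, -⟩, -⟩ := Relation.TransGen.head'_iff.1 h
  obtain ⟨_, -, K, -, hbK, -⟩ := Relation.TransGen.tail'_iff.1 h
  exact ⟨hS H H.2 (hA H), hS K K.2 hbK⟩

theorem IsOrientation.prec_of_mem_uIcc (hA : IsOrientation 𝕀 A)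
    (h𝕀 : ∀ H ∈ 𝕀, (H : Set ℕ).OrdConnected) (hab : prec 𝕀 A a b) (hc : c ∈ Set.uIcc a b)
    (hca : c ≠ a) : prec 𝕀 A a c := by
  induction hab with
  | single h =>
    obtain ⟨H, rfl, hbH, -⟩ := h
    exact .single ⟨H, rfl, (h𝕀 H H.2).uIcc_subset (hA H) hbH hc, hca⟩
  | tail ham h ih =>
    obtain ⟨H, rfl, hbH, -⟩ := h
    rcases Set.uIcc_subset_uIcc_union_uIcc (b := A H) hc with hc | hc
    · exact ih hc
    · rcases eq_or_ne c (A H) with rfl | hcH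
      · exact ham
      · exact .tail ham ⟨H, rfl, (h𝕀 H H.2).uIcc_subset (hA H) hbH hc, hcH⟩

theorem IsOrientation.betweenClosed_prec_lt (hA : IsOrientation 𝕀 A)
    (h𝕀 : ∀ H ∈ 𝕀, (H : Set ℕ).OrdConnected) : BetweenClosed (prec 𝕀 A) (· < ·) :=
  fun _ _ _ hab hc => hA.prec_of_mem_uIcc h𝕀 hab (Set.mem_uIcc.2 (by lia)) (by lia)

theorem IsOrientation.orMap_eq_iff (hA : IsOrientation 𝕀 A) {π : Equiv.Perm ℕ} :
    orMap 𝕀 π = A ↔ IsLinearExtension (prec 𝕀 A) π := by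
  constructor
  · rintro rfl a b hab
    refine Relation.TransGen.trans_induction_on hab ?_ fun _ _ => lt_trans
    rintro _ c ⟨H, rfl, hc, hne⟩
    refine lt_of_le_of_ne ?_ (π.symm.injective.ne hne.symm)
    rw [orMap, Equiv.symm_apply_apply]
    exact Nat.sInf_le (by simpa using hc)
  · intro hπ
    funext H
    have first : IsLeast {p | π p ∈ H.1} (π.symm (A H)) := by
      refine ⟨by simpa using hA H, fun p hp => ?_⟩
      rcases eq_or_ne (π p) (A H) with hpA | hpA
      · rw [← hpA, Equiv.symm_apply_apply]
      · simpa using (hπ (.single ⟨H, rfl, hp, hpA⟩)).le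
    rw [orMap, first.csInf_eq, Equiv.apply_symm_apply]

theorem IsIntervalHypergraph.subset_Icc {n : ℕ} (h𝕀 : IsIntervalHypergraph n 𝕀) :
    ∀ H ∈ 𝕀, H ⊆ Finset.Icc 1 n := by
  intro H hH
  obtain ⟨a, b, ha, -, hb, rfl⟩ := h𝕀.1 H hH
  exact Finset.Icc_subset_Icc ha hb

theorem IsIntervalHypergraph.ordConnected {n : ℕ} (h𝕀 : IsIntervalHypergraph n 𝕀) :
    ∀ H ∈ 𝕀, (H : Set ℕ).OrdConnected := by
  intro H hH
  obtain ⟨a, b, -, -, -, rfl⟩ := h𝕀.1 H hH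
  rw [Finset.coe_Icc]
  exact Set.ordConnected_Icc

end Orientation

/-- The fiber `Or⁻¹(A)` of an acyclic orientation `A` of an interval
hypergraph is a nonempty interval `[σ, τ]` of the weak order, whose minimum `σ` avoids
the pattern 231 and whose maximum `τ` avoids the pattern 213. -/
theorem stmt7 (n : ℕ) (hn : 1 ≤ n) (𝕀 : Finset (Finset ℕ))
    (h𝕀 : IsIntervalHypergraph n 𝕀) (A : Edge 𝕀 → ℕ) (hA : AcycOr 𝕀 A) :
    ∃ σ τ : Equiv.Perm ℕ, IsPermOn n σ ∧ IsPermOn n τ ∧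
      orMap 𝕀 σ = A ∧ orMap 𝕀 τ = A ∧
      (∀ π, IsPermOn n π → (orMap 𝕀 π = A ↔ weakLe n σ π ∧ weakLe n π τ)) ∧
      ¬Contains231 n σ ∧ ¬Contains213 n τ := by
  have := hA.2.isStrictOrder_prec
  have closed := hA.1.betweenClosed_prec_lt h𝕀.ordConnected
  have := closed.isStrictTotalOrder_tieBreak
  have := closed.swap.isStrictTotalOrder_tieBreak
  have supp ⦃a b⦄ : prec 𝕀 A a b → a ∈ Finset.Icc 1 n ∧ b ∈ Finset.Icc 1 n :=
    hA.1.mem_of_prec h𝕀.subset_Icc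
  obtain ⟨σ, hσn, hσ⟩ := exists_isListing (Finset.Icc 1 n) (tieBreak (prec 𝕀 A) (· < ·))
  obtain ⟨τ, hτn, hτ⟩ := exists_isListing (Finset.Icc 1 n) (tieBreak (prec 𝕀 A) (· > ·))
  have fiber π : orMap 𝕀 π = A ↔ IsLinearExtension (prec 𝕀 A) π := hA.1.orMap_eq_iff
  exact ⟨σ, τ, hσn, hτn, (fiber σ).2 (hσ.isLinearExtension supp),
    (fiber τ).2 (hτ.isLinearExtension supp),
    fun π _ => (fiber π).trans (isLinearExtension_iff_weakLe supp hσ hτ),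
    hσ.not_contains231 hσn closed, hτ.not_contains213 hτn closed.swap⟩

end IHL
end
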